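/- For every sufficiently small δ > 0, as h → 0 with ε = ε(h) → 0 and ε(h)/√h → ∞, one has E( X_h²·1_{|X_h| ≤ ε} ) − E( X̃_h²·1_{|X̃_h| ≤ ε} ) = O(h³·ε^{−Y−2}) + O(h^{3/2}·ε^{1−Y/2}) + O(h²·ε^{2−2Y}) + O(h^{1−δ}·ε^{3−Y+δY}) + O(√h·ε·e^{−ε²/(2σ²h)}) + O(√h·ε^{3−Y}·e^{−ε²/(8σ²h)}) (a sum of functions, each big-O of the indicated rate). -/

import Mathlib

open MeasureTheory ProbabilityTheory Filter Asymptotics Set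
open scoped Topology NNReal ENNReal Real

noncomputable section

/-- The Lévy density `s(x) = (C₊·1_{x>0} + C₋·1_{x<0})·q(x)·|x|^{−1−Y}`. -/
def levyDensity (Y Cp Cm : ℝ) (q : ℝ → ℝ) (x : ℝ) : ℝ :=
  (if 0 < x then Cp else if x < 0 then Cm else 0) * q x * |x| ^ (-1 - Y)

/-- The Lévy measure `ν(dx) = s(x) dx`. -/
def levyMeasure (Y Cp Cm : ℝ) (q : ℝ → ℝ) : Measure ℝ :=
  volume.withDensity fun x => ENNReal.ofReal (levyDensity Y Cp Cm q x)

/-- The Lévy exponent `ψ_J(u) = ibu + ∫ (e^{iux} − 1 − iux·1_{|x|≤1}) ν(dx)`. -/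
def psiJ (b Y Cp Cm : ℝ) (q : ℝ → ℝ) (u : ℝ) : ℂ :=
  Complex.I * b * u +
    ∫ x : ℝ,
      (Complex.exp (Complex.I * u * x) - 1 - (if |x| ≤ 1 then Complex.I * u * x else 0))
      ∂(levyMeasure Y Cp Cm q)

/-- The scale parameter `ς = ((C₊+C₋)Γ(−Y)|cos(πY/2)|)^{1/Y}`. -/
def varsigma (Y Cp Cm : ℝ) : ℝ :=
  ((Cp + Cm) * Real.Gamma (-Y) * |Real.cos (π * Y / 2)|) ^ (1 / Y)

/-- The stable part of the Lévy exponent: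
`ς^Y |u|^Y (1 − iβ·sgn(u)·tan(πY/2))` with `β = (C₊−C₋)/(C₊+C₋)`. -/
def stablePart (Y Cp Cm : ℝ) (u : ℝ) : ℂ :=
  (varsigma Y Cp Cm ^ Y * |u| ^ Y : ℝ) *
    (1 - Complex.I * ((Cp - Cm) / (Cp + Cm)) * Real.sign u * Real.tan (π * Y / 2))

/-- Characteristic function of `X̃_h`, the time-`h` marginal of a Brownian motion with
variance `σ²` plus an independent strictly `Y`-stable process. -/
def tildeCF (σ Y Cp Cm : ℝ) (h u : ℝ) : ℂ :=
  Complex.exp (-(σ ^ 2 * u ^ 2 * h / 2) - h * stablePart Y Cp Cm u)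

/-!
The laws of `X_h` and `X̃_h` differ only by a drift and by jumps of density
`κ = levyDensity (q - 1)`, which is one order smaller near `0` than the stable density: it satisfies
`∫ |x||κ(x)| dx < ∞`. Multiplying the exponent `u ↦ ∫ (e^{iux} - 1) κ(x) dx` by `t ∈ [0, 1]`
interpolates between the two laws, and differentiating an expectation in `t` averages its
translations against `κ`: `d/dt E f(Z_t) = h ∫ (E f(Z_t + x) - E f(Z_t)) κ(x) dx`. This is justified
for the discontinuous truncated square `f` by Fourier inversion against a Gaussian factor set aside
from `Z_t`.

The increments of `x ↦ E f(Z_t + x)` are controlled by the first moment of `Z_t`, by its density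
around the two points `±ε` where `f` jumps and, for the remaining shift by a drift, by its truncated
mean. A bound `A|u|^Y + Bu²` on the centred characteristic exponent gives all three, uniformly in
`t`. Gaussian tails at `±ε` are bounded by powers of `h / ε²`, which the first four rates absorb.
-/

/-! ### The Gamma integral on the right half-plane -/

/-- The compensated exponential `e^z − 1 − z`: with `z = iux` it is the integrand of a Lévy exponent
compensated on all of `ℝ`. -/
def compExp (z : ℂ) : ℂ := Complex.exp z - 1 - z

@[fun_prop]
lemma continuous_compExp : Continuous compExp := by unfold compExp; fun_prop

@[simp]
lemma compExp_zero : compExp 0 = 0 := by simp [compExp]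

lemma norm_exp_sub_one_le_two_mul_min {z : ℂ} (hz : z.re ≤ 0) :
    ‖Complex.exp z - 1‖ ≤ 2 * min ‖z‖ 1 := by
  rcases le_total ‖z‖ 1 with h | h
  · rw [min_eq_left h]
    exact Complex.norm_exp_sub_one_le h
  · have hexp : ‖Complex.exp z‖ ≤ 1 := by
      rw [Complex.norm_exp]
      exact Real.exp_le_one_iff.mpr hz
    have := norm_sub_le (Complex.exp z) 1
    rw [min_eq_right h, norm_one] at *
    linarith

lemma norm_compExp_le {z : ℂ} (hz : z.re ≤ 0) : ‖compExp z‖ ≤ 3 * (‖z‖ * min ‖z‖ 1) := by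
  rcases le_total ‖z‖ 1 with h | h
  · rw [min_eq_left h]
    have : ‖compExp z‖ ≤ ‖z‖ ^ 2 := Complex.norm_exp_sub_one_sub_id_le h
    nlinarith [sq_nonneg ‖z‖]
  · have h1 := norm_exp_sub_one_le_two_mul_min hz
    have : ‖compExp z‖ ≤ ‖Complex.exp z - 1‖ + ‖z‖ := norm_sub_le _ _
    rw [min_eq_right h] at *
    linarith

lemma norm_compExp_mul_ofReal_le {w : ℂ} {R x : ℝ} (hR : 0 < R) (hw : ‖w‖ ≤ R)
    (hre : (w * x).re ≤ 0) : ‖compExp (w * x)‖ ≤ 3 * R ^ 2 * (|x| * min |x| R⁻¹) := by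
  calc ‖compExp (w * x)‖ ≤ 3 * (‖w‖ * |x| * min (‖w‖ * |x|) 1) := by
        simpa using norm_compExp_le hre
    _ ≤ 3 * (R * |x| * min (R * |x|) 1) := by gcongr
    _ = 3 * R ^ 2 * (|x| * min |x| R⁻¹) := by
        rw [← mul_inv_cancel₀ hR.ne', ← mul_min_of_nonneg _ _ hR.le]
        ring

lemma norm_compExp_mul_ofReal_le_of_one_le {w : ℂ} {R x : ℝ} (hR : 1 ≤ R) (hw : ‖w‖ ≤ R)
    (hx : 0 ≤ x) (hre : (w * x).re ≤ 0) : ‖compExp (w * x)‖ ≤ 3 * R ^ 2 * (x * min x 1) := by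
  refine (norm_compExp_mul_ofReal_le (by positivity) hw hre).trans ?_
  rw [abs_of_nonneg hx]
  gcongr
  exact inv_le_one_of_one_le₀ hR

lemma norm_exp_mul_ofReal_sub_one_le {w : ℂ} {R x : ℝ} (hR : 1 ≤ R) (hw : ‖w‖ ≤ R)
    (hx : 0 ≤ x) (hre : (w * x).re ≤ 0) : ‖Complex.exp (w * x) - 1‖ ≤ 2 * R * min x 1 := by
  calc ‖Complex.exp (w * x) - 1‖ ≤ 2 * min (‖w‖ * x) 1 := by
        simpa [abs_of_nonneg hx] using norm_exp_sub_one_le_two_mul_min hre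
    _ ≤ 2 * min (R * x) (R * 1) := by gcongr; simpa using hR
    _ = 2 * R * min x 1 := by rw [← mul_min_of_nonneg _ _ (by positivity), mul_assoc]

lemma mul_rpow_neg_one_sub {Y : ℝ} (hY : Y ≠ 0) {x : ℝ} (hx : 0 ≤ x) :
    x * x ^ (-1 - Y) = x ^ (-Y) := by
  rcases hx.eq_or_lt with rfl | hx
  · simp [hY]
  · rw [show -Y = 1 + (-1 - Y) by ring, Real.rpow_add hx, Real.rpow_one]

lemma integrableOn_min_one_mul_rpow_neg {Y : ℝ} (hY1 : 1 < Y) (hY2 : Y < 2) :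
    IntegrableOn (fun x : ℝ => min x 1 * x ^ (-Y)) (Ioi 0) := by
  rw [← Ioc_union_Ioi_eq_Ioi (zero_le_one' ℝ)]
  refine IntegrableOn.union ?_ ?_
  · have : IntegrableOn (fun x : ℝ => x ^ (1 - Y)) (Ioc 0 1) := by
      rw [← intervalIntegrable_iff_integrableOn_Ioc_of_le zero_le_one]
      exact intervalIntegral.intervalIntegrable_rpow' (by linarith)
    refine this.congr_fun (fun x hx => ?_) measurableSet_Ioc
    simp only
    rw [min_eq_left hx.2, sub_eq_add_neg, Real.rpow_add hx.1, Real.rpow_one]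
  · refine (integrableOn_Ioi_rpow_of_lt (by linarith : -Y < -1) one_pos).congr_fun
      (fun x hx => ?_) measurableSet_Ioi
    simp only
    rw [min_eq_right (le_of_lt hx), one_mul]

lemma tendsto_min_one_mul_rpow_nhdsGT_zero {Y : ℝ} (hY2 : Y < 2) :
    Tendsto (fun x : ℝ => min x 1 * x ^ (1 - Y)) (𝓝[>] 0) (𝓝 0) := by
  have h0 : Tendsto (fun x : ℝ => x ^ (2 - Y)) (𝓝[>] 0) (𝓝 0) := by
    have := (Real.continuousAt_rpow_const 0 (2 - Y) (Or.inr (by linarith))).tendsto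
    rw [Real.zero_rpow (by linarith)] at this
    exact this.mono_left nhdsWithin_le_nhds
  refine squeeze_zero' ?_ ?_ h0 <;> filter_upwards [self_mem_nhdsWithin] with x (hx : 0 < x)
  · positivity
  · rw [show 2 - Y = 1 + (1 - Y) by ring, Real.rpow_add hx, Real.rpow_one]
    gcongr
    exact min_le_left _ _

lemma tendsto_min_one_mul_rpow_atTop {Y : ℝ} (hY1 : 1 < Y) :
    Tendsto (fun x : ℝ => min x 1 * x ^ (1 - Y)) atTop (𝓝 0) := by
  have h0 : Tendsto (fun x : ℝ => x ^ (1 - Y)) atTop (𝓝 0) := by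
    simpa using tendsto_rpow_neg_atTop (y := Y - 1) (by linarith)
  refine squeeze_zero' ?_ ?_ h0 <;> filter_upwards [eventually_gt_atTop 0] with x hx
  · positivity
  · exact mul_le_of_le_one_left (by positivity) (min_le_right _ _)

lemma integral_Ioi_mul_rpow_neg_one_sub {u u' : ℝ → ℂ} {p : ℝ} (hp : p ≠ 0)
    (hu : ∀ x, 0 < x → HasDerivAt u (u' x) x)
    (hint : IntegrableOn (fun x => u x * ((x ^ (-1 - p) : ℝ) : ℂ)) (Ioi 0))
    (hint' : IntegrableOn (fun x => u' x * ((x ^ (-p) : ℝ) : ℂ)) (Ioi 0))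
    (hzero : Tendsto (fun x => u x * ((x ^ (-p) : ℝ) : ℂ)) (𝓝[>] 0) (𝓝 0))
    (htop : Tendsto (fun x => u x * ((x ^ (-p) : ℝ) : ℂ)) atTop (𝓝 0)) :
    ∫ x in Ioi (0 : ℝ), u x * ((x ^ (-1 - p) : ℝ) : ℂ) =
      (p : ℂ)⁻¹ * ∫ x in Ioi (0 : ℝ), u' x * ((x ^ (-p) : ℝ) : ℂ) := by
  have hv : ∀ x : ℝ, 0 < x →
      HasDerivAt (fun x : ℝ => -(p : ℂ)⁻¹ * ((x ^ (-p) : ℝ) : ℂ)) ((x ^ (-1 - p) : ℝ) : ℂ) x := by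
    intro x hx
    convert! ((Real.hasDerivAt_rpow_const (p := -p) (Or.inl hx.ne')).ofReal_comp).const_mul
      (-(p : ℂ)⁻¹) using 1
    rw [show -p - 1 = -1 - p by ring]
    have : (p : ℂ) ≠ 0 := mod_cast hp
    push_cast
    field_simp
  have := integral_Ioi_mul_deriv_eq_deriv_mul hu hv hint (a' := 0) (b' := 0)
    ((hint'.const_mul (-(p : ℂ)⁻¹)).congr (ae_of_all _ fun x => by simp [mul_left_comm]))
    (by simpa [Pi.mul_def, mul_left_comm] using hzero.const_mul (-(p : ℂ)⁻¹))
    (by simpa [Pi.mul_def, mul_left_comm] using htop.const_mul (-(p : ℂ)⁻¹))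
  rw [this, sub_zero, zero_sub, ← integral_neg, ← integral_const_mul]
  congr with x
  ring

lemma integral_Ioi_mul_rpow_of_norm_le {u u' : ℝ → ℂ} {p Y C : ℝ} (hp : p ≠ 0) (hY1 : 1 < Y)
    (hY2 : Y < 2) (hu : ∀ x, 0 < x → HasDerivAt u (u' x) x)
    (hC : ∀ x, 0 < x → ‖u x‖ ≤ C * (x ^ (p + 1 - Y) * min x 1))
    (hint' : IntegrableOn (fun x => u' x * ((x ^ (-p) : ℝ) : ℂ)) (Ioi 0)) :
    IntegrableOn (fun x => u x * ((x ^ (-1 - p) : ℝ) : ℂ)) (Ioi 0) ∧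
      ∫ x in Ioi (0 : ℝ), u x * ((x ^ (-1 - p) : ℝ) : ℂ) =
        (p : ℂ)⁻¹ * ∫ x in Ioi (0 : ℝ), u' x * ((x ^ (-p) : ℝ) : ℂ) := by
  have hbound : ∀ k x, 0 < x → ‖u x * ((x ^ k : ℝ) : ℂ)‖ ≤ C * (min x 1 * x ^ (p + 1 - Y + k)) := by
    intro k x hx
    rw [norm_mul, Complex.norm_real, Real.norm_of_nonneg (by positivity), Real.rpow_add hx]
    calc ‖u x‖ * x ^ k ≤ C * (x ^ (p + 1 - Y) * min x 1) * x ^ k := by gcongr; exact hC x hx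
      _ = _ := by ring
  have hint : IntegrableOn (fun x => u x * ((x ^ (-1 - p) : ℝ) : ℂ)) (Ioi 0) := by
    have hcont : ContinuousOn u (Ioi 0) := fun x hx => (hu x hx).continuousAt.continuousWithinAt
    refine Integrable.mono' ((integrableOn_min_one_mul_rpow_neg hY1 hY2).const_mul C)
      ((hcont.aestronglyMeasurable measurableSet_Ioi).mul (by fun_prop))
      ((ae_restrict_iff' measurableSet_Ioi).mpr (ae_of_all _ fun x hx => ?_))
    convert! hbound (-1 - p) x hx using 4
    ring
  have hlim : ∀ l : Filter ℝ, (∀ᶠ x in l, 0 < x) →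
      Tendsto (fun x : ℝ => min x 1 * x ^ (1 - Y)) l (𝓝 0) →
      Tendsto (fun x => u x * ((x ^ (-p) : ℝ) : ℂ)) l (𝓝 0) := by
    intro l hl h0
    refine squeeze_zero_norm' ?_ (by simpa using h0.const_mul C)
    filter_upwards [hl] with x hx
    convert! hbound (-p) x hx using 4
    ring
  exact ⟨hint, integral_Ioi_mul_rpow_neg_one_sub hp hu hint hint'
    (hlim _ self_mem_nhdsWithin (tendsto_min_one_mul_rpow_nhdsGT_zero hY2))
    (hlim _ (eventually_gt_atTop 0) (tendsto_min_one_mul_rpow_atTop hY1))⟩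

lemma integrableOn_rpow_mul_exp_neg_mul {s r : ℝ} (hs : 0 < s) (hr : 0 < r) :
    IntegrableOn (fun x : ℝ => x ^ (s - 1) * Real.exp (-(r * x))) (Ioi 0) := by
  simpa using integrableOn_rpow_mul_exp_neg_mul_rpow (s := s - 1) (by linarith) one_pos hr

/-- The measure `x^{s-1} dx` on `(0, ∞)`, whose complex moment generating function at `-r` is the
Gamma integral with rate `r`. -/
def gammaWeight (s : ℝ) : Measure ℝ :=
  (volume.restrict (Ioi 0)).withDensity fun x => ENNReal.ofReal (x ^ (s - 1))

lemma complexMGF_gammaWeight (s : ℝ) (r : ℂ) :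
    complexMGF id (gammaWeight s) (-r) =
      ∫ x in Ioi (0 : ℝ), Complex.exp (-(r * x)) * ((x ^ (s - 1) : ℝ) : ℂ) := by
  rw [complexMGF, gammaWeight,
    integral_withDensity_eq_integral_toReal_smul (by fun_prop) (by simp)]
  refine setIntegral_congr_fun measurableSet_Ioi fun x hx => ?_
  rw [ENNReal.toReal_ofReal (Real.rpow_nonneg (le_of_lt hx) _)]
  simp [mul_comm]

lemma Iio_zero_subset_interior_integrableExpSet_gammaWeight {s : ℝ} (hs : 0 < s) :
    Iio 0 ⊆ interior (integrableExpSet id (gammaWeight s)) := by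
  refine interior_maximal (fun t ht => ?_) isOpen_Iio
  rw [integrableExpSet, mem_ofPred_eq, gammaWeight,
    integrable_withDensity_iff_integrable_smul₀' (by fun_prop) (by simp)]
  refine IntegrableOn.congr_fun (integrableOn_rpow_mul_exp_neg_mul hs (neg_pos.mpr ht))
    (fun x hx => ?_) measurableSet_Ioi
  simp [ENNReal.toReal_ofReal (Real.rpow_nonneg (le_of_lt hx) (s - 1))]

lemma integral_cexp_neg_mul_mul_rpow_Ioi {s : ℝ} (hs : 0 < s) {r : ℂ} (hr : 0 < r.re) :
    ∫ x in Ioi (0 : ℝ), Complex.exp (-(r * x)) * ((x ^ (s - 1) : ℝ) : ℂ) =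
      r ^ (-s : ℂ) * Real.Gamma s := by
  have hF : AnalyticOnNhd ℂ (fun r => complexMGF id (gammaWeight s) (-r)) {z : ℂ | 0 < z.re} :=
    fun z hz => (analyticAt_complexMGF (Iio_zero_subset_interior_integrableExpSet_gammaWeight hs
      (by simpa using hz))).fun_comp analyticAt_id.neg
  have hG : AnalyticOnNhd ℂ (fun r : ℂ => r ^ (-s : ℂ) * (Real.Gamma s : ℂ)) {z : ℂ | 0 < z.re} :=
    fun z hz => (analyticAt_id.cpow analyticAt_const (Or.inl hz)).mul analyticAt_const
  rw [← complexMGF_gammaWeight]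
  refine hF.eqOn_of_preconnected_of_frequently_eq hG (z₀ := 1)
    (convex_halfSpace_re_gt 0).isPreconnected (by simp) ?_ hr
  have hreal : Tendsto (fun r : ℝ => (r : ℂ)) (𝓝[>] 1) (𝓝[≠] 1) := by
    refine tendsto_nhdsWithin_iff.mpr
      ⟨(Complex.continuous_ofReal.tendsto 1).mono_left nhdsWithin_le_nhds, ?_⟩
    filter_upwards [self_mem_nhdsWithin] with r (hr : 1 < r)
    simpa using hr.ne'
  refine hreal.frequently (Eventually.frequently ?_)
  filter_upwards [self_mem_nhdsWithin] with r (hr : 1 < r)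
  have hr0 : 0 < r := one_pos.trans hr
  have key := congrArg Complex.ofReal (Real.integral_rpow_mul_exp_neg_mul_Ioi hs hr0)
  rw [one_div, Real.inv_rpow hr0.le, ← Real.rpow_neg hr0.le, ← integral_complex_ofReal,
    Complex.ofReal_mul, Complex.ofReal_cpow hr0.le, Complex.ofReal_neg] at key
  rw [complexMGF_gammaWeight, ← key]
  congr with x
  push_cast
  ring

lemma integrableOn_cexp_neg_mul_mul_rpow {s : ℝ} (hs : 0 < s) {r : ℂ} (hr : 0 < r.re) :
    IntegrableOn (fun x : ℝ => Complex.exp (-(r * x)) * ((x ^ (s - 1) : ℝ) : ℂ)) (Ioi 0) := by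
  refine (integrableOn_rpow_mul_exp_neg_mul hs hr).mono' (by fun_prop)
    ((ae_restrict_iff' measurableSet_Ioi).mpr (ae_of_all _ fun x hx => ?_))
  rw [norm_mul, Complex.norm_exp, Complex.norm_real,
    Real.norm_of_nonneg (Real.rpow_nonneg (le_of_lt hx) _), mul_comm]
  simp

lemma re_neg_mul_ofReal_nonpos {r : ℂ} {x : ℝ} (hr : 0 ≤ r.re) (hx : 0 ≤ x) :
    (-r * x).re ≤ 0 := by
  simpa using mul_nonneg hr hx

lemma hasDerivAt_cexp_neg_mul_ofReal (r : ℂ) (x : ℝ) :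
    HasDerivAt (fun x : ℝ => Complex.exp (-r * x)) (-(r * Complex.exp (-r * x))) x := by
  simpa [mul_comm] using ((hasDerivAt_id x).ofReal_comp.const_mul (-r)).cexp

lemma integral_one_sub_cexp_neg_mul {Y : ℝ} (hY1 : 1 < Y) (hY2 : Y < 2) {r : ℂ}
    (hr : 0 < r.re) :
    IntegrableOn (fun x : ℝ => (1 - Complex.exp (-r * x)) * ((x ^ (-Y) : ℝ) : ℂ)) (Ioi 0) ∧
      ∫ x in Ioi (0 : ℝ), (1 - Complex.exp (-r * x)) * ((x ^ (-Y) : ℝ) : ℂ) =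
        (Y - 1 : ℂ)⁻¹ * r ^ (Y - 1 : ℂ) * Real.Gamma (2 - Y) := by
  have hr0 : r ≠ 0 := by rintro rfl; simp at hr
  obtain ⟨hint, heq⟩ := integral_Ioi_mul_rpow_of_norm_le (p := Y - 1) (Y := Y)
    (u := fun x => 1 - Complex.exp (-r * x)) (u' := fun x => r * Complex.exp (-r * x))
    (C := 2 * max ‖r‖ 1) (by linarith) hY1 hY2
    (fun x _ => by simpa using (hasDerivAt_cexp_neg_mul_ofReal r x).const_sub 1)
    (fun x hx => by
      rw [norm_sub_rev]
      simpa using norm_exp_mul_ofReal_sub_one_le (w := -r) (le_max_right ‖r‖ 1) (by simp) hx.le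
        (re_neg_mul_ofReal_nonpos hr.le hx.le))
    (((integrableOn_cexp_neg_mul_mul_rpow (s := 2 - Y) (by linarith) hr).const_mul r).congr
      (ae_of_all _ fun x => by ring_nf))
  rw [show -1 - (Y - 1) = -Y by ring] at hint heq
  refine ⟨hint, ?_⟩
  have hGamma := integral_cexp_neg_mul_mul_rpow_Ioi (s := 2 - Y) (by linarith) hr
  rw [heq, show -(Y - 1) = 2 - Y - 1 by ring]
  simp_rw [mul_assoc, neg_mul, integral_const_mul]
  rw [hGamma, ← mul_assoc r, show (Y - 1 : ℂ) = 1 + -(2 - Y : ℝ) by push_cast; ring,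
    Complex.cpow_add _ _ hr0, Complex.cpow_one]
  push_cast
  ring

lemma integral_compExp_neg_mul_of_re_pos {Y : ℝ} (hY1 : 1 < Y) (hY2 : Y < 2) {r : ℂ}
    (hr : 0 < r.re) :
    ∫ x in Ioi (0 : ℝ), compExp (-r * x) * ((x ^ (-1 - Y) : ℝ) : ℂ) =
      r ^ (Y : ℂ) * Real.Gamma (-Y) := by
  have hr0 : r ≠ 0 := by rintro rfl; simp at hr
  obtain ⟨hint, hintegral⟩ := integral_one_sub_cexp_neg_mul hY1 hY2 hr
  obtain ⟨-, heq⟩ := integral_Ioi_mul_rpow_of_norm_le (p := Y) (Y := Y)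
    (u := fun x => compExp (-r * x)) (u' := fun x => r * (1 - Complex.exp (-r * x)))
    (C := 3 * max ‖r‖ 1 ^ 2) (by linarith) hY1 hY2
    (fun x _ => by
      convert! ((hasDerivAt_cexp_neg_mul_ofReal r x).sub_const 1).sub
        ((hasDerivAt_id x).ofReal_comp.const_mul (-r)) using 1
      push_cast
      ring)
    (fun x hx => by
      simpa using norm_compExp_mul_ofReal_le_of_one_le (w := -r) (le_max_right ‖r‖ 1) (by simp)
        hx.le (re_neg_mul_ofReal_nonpos hr.le hx.le))
    ((hint.const_mul r).congr (ae_of_all _ fun x => by ring))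
  have hY : (Y : ℂ) ≠ 0 := mod_cast by linarith
  have hY' : (Y - 1 : ℂ) ≠ 0 := mod_cast by linarith
  have hGamma : Real.Gamma (2 - Y) = (1 - Y) * (-Y * Real.Gamma (-Y)) := by
    rw [← Real.Gamma_add_one (by linarith), show -Y + 1 = 1 - Y by ring,
      ← Real.Gamma_add_one (by linarith)]
    ring_nf
  rw [heq]
  simp_rw [mul_assoc r, integral_const_mul]
  rw [hintegral, hGamma, show (Y : ℂ) = 1 + (Y - 1) by ring, Complex.cpow_add _ _ hr0,
    Complex.cpow_one, show (1 + (Y - 1) : ℂ) = Y by ring]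
  push_cast
  field_simp
  ring

/-- Boundary case of the Gamma integral, as a limit from the open half-plane. -/
lemma integral_compExp_neg_mul {Y : ℝ} (hY1 : 1 < Y) (hY2 : Y < 2) {r : ℂ} (hr : 0 ≤ r.re)
    (hr0 : r ≠ 0) :
    ∫ x in Ioi (0 : ℝ), compExp (-r * x) * ((x ^ (-1 - Y) : ℝ) : ℂ) =
      r ^ (Y : ℂ) * Real.Gamma (-Y) := by
  have hlim : Tendsto (fun δ : ℝ => r + δ) (𝓝[>] 0) (𝓝 r) := by
    have : Continuous fun δ : ℝ => r + δ := by fun_prop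
    simpa using (this.tendsto 0).mono_left nhdsWithin_le_nhds
  have hδ : ∀ᶠ δ : ℝ in 𝓝[>] 0, 0 < δ ∧ δ ≤ 1 := by
    filter_upwards [Ioc_mem_nhdsGT one_pos] with δ hδ using hδ
  have hslit : r ∈ Complex.slitPlane := by
    rcases hr.eq_or_lt with h | h
    · exact Or.inr fun him => hr0 (Complex.ext h.symm him)
    · exact Or.inl h
  set R := ‖r‖ + 1
  have hR : 1 ≤ R := by simp [R]
  refine tendsto_nhds_unique (f := fun δ : ℝ =>
    ∫ x in Ioi (0 : ℝ), compExp (-(r + δ) * x) * ((x ^ (-1 - Y) : ℝ) : ℂ)) (l := 𝓝[>] 0) ?_ ?_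
  · refine tendsto_integral_filter_of_dominated_convergence
      (fun x => 3 * R ^ 2 * (min x 1 * x ^ (-Y))) ?_ ?_
      ((integrableOn_min_one_mul_rpow_neg hY1 hY2).const_mul _) ?_
    · exact Eventually.of_forall fun δ => by fun_prop
    · filter_upwards [hδ] with δ hδ
      refine (ae_restrict_iff' measurableSet_Ioi).mpr (ae_of_all _ fun x (hx : 0 < x) => ?_)
      have hnorm : ‖-(r + δ)‖ ≤ R := by
        rw [norm_neg]
        refine (norm_add_le _ _).trans (add_le_add_right ?_ _)
        simpa [abs_of_pos hδ.1] using hδ.2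
      have hre : (-(r + δ) * x).re ≤ 0 :=
        re_neg_mul_ofReal_nonpos (add_nonneg hr (by simpa using hδ.1.le)) hx.le
      rw [norm_mul, Complex.norm_real, Real.norm_of_nonneg (by positivity),
        ← mul_rpow_neg_one_sub (by linarith) hx.le]
      calc _ ≤ 3 * R ^ 2 * (x * min x 1) * x ^ (-1 - Y) := by
            gcongr
            exact norm_compExp_mul_ofReal_le_of_one_le hR hnorm hx.le hre
        _ = _ := by ring
    · refine ae_of_all _ fun x => ?_
      have : Continuous fun w : ℂ => compExp (-w * x) * ((x ^ (-1 - Y) : ℝ) : ℂ) := by fun_prop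
      exact (this.tendsto r).comp hlim
  · refine (((continuousAt_cpow_const hslit).tendsto.comp hlim).mul_const _).congr' ?_
    filter_upwards [hδ] with δ hδ
    exact (integral_compExp_neg_mul_of_re_pos hY1 hY2 (by simp; linarith [hδ.1])).symm

/-! ### Compensated exponential integrals -/

lemma integrable_min_mul_rpow_neg {Y e : ℝ} (hY1 : 1 < Y) (hY2 : Y < 2) (he : 0 < e) :
    Integrable (fun x : ℝ => min |x| e * |x| ^ (-Y)) ∧
      ∫ x : ℝ, min |x| e * |x| ^ (-Y) = e ^ (2 - Y) * ∫ x : ℝ, min |x| 1 * |x| ^ (-Y) := by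
  have hone : Integrable (fun x : ℝ => min |x| 1 * |x| ^ (-Y)) := by
    have := (integrable_fun_norm_addHaar volume (E := ℝ) (f := fun x => min x 1 * x ^ (-Y))).mpr
      (by simpa using integrableOn_min_one_mul_rpow_neg hY1 hY2)
    simpa using this
  have hscale : ∀ x : ℝ,
      min |x| e * |x| ^ (-Y) = e ^ (1 - Y) * (min |e⁻¹ * x| 1 * |e⁻¹ * x| ^ (-Y)) := by
    intro x
    have hmin : min |x| e = e * min (e⁻¹ * |x|) 1 := by
      rw [mul_min_of_nonneg _ _ he.le, mul_one, mul_inv_cancel_left₀ he.ne']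
    rw [abs_mul, abs_of_pos (inv_pos.mpr he), Real.mul_rpow (by positivity) (abs_nonneg _),
      Real.inv_rpow he.le, Real.rpow_neg he.le, inv_inv, Real.rpow_sub he, Real.rpow_one, hmin]
    have := Real.rpow_pos_of_pos he Y
    field_simp
  refine ⟨((hone.comp_mul_left' (inv_ne_zero he.ne')).const_mul (e ^ (1 - Y))).congr
    (ae_of_all _ fun x => (hscale x).symm), ?_⟩
  simp_rw [hscale]
  rw [integral_const_mul, Measure.integral_comp_mul_left (fun x => min |x| 1 * |x| ^ (-Y)),
    inv_inv, abs_of_pos he, smul_eq_mul, ← mul_assoc, show 2 - Y = (1 - Y) + 1 by ring,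
    Real.rpow_add he, Real.rpow_one]

lemma norm_compExp_I_mul_mul_le {Y K u d x : ℝ} (hY : Y ≠ 0) (hu : u ≠ 0)
    (hd : |d| ≤ K * |x| ^ (-1 - Y)) :
    ‖compExp (Complex.I * u * x) * (d : ℂ)‖ ≤
      3 * K * u ^ 2 * (min |x| |u|⁻¹ * |x| ^ (-Y)) := by
  have hcomp : ‖compExp (Complex.I * u * x)‖ ≤ 3 * |u| ^ 2 * (|x| * min |x| |u|⁻¹) :=
    norm_compExp_mul_ofReal_le (abs_pos.mpr hu) (by simp) (by simp)
  rw [norm_mul, Complex.norm_real, Real.norm_eq_abs]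
  calc _ ≤ 3 * |u| ^ 2 * (|x| * min |x| |u|⁻¹) * (K * |x| ^ (-1 - Y)) := by gcongr
    _ = _ := by
      rw [← mul_rpow_neg_one_sub hY (abs_nonneg x), sq_abs]
      ring

lemma integrable_compExp_I_mul_mul {Y K : ℝ} (hY1 : 1 < Y) (hY2 : Y < 2) {d : ℝ → ℝ}
    (hd : Measurable d) (hK : ∀ x, |d x| ≤ K * |x| ^ (-1 - Y)) (u : ℝ) :
    Integrable fun x : ℝ => compExp (Complex.I * u * x) * (d x : ℂ) := by
  rcases eq_or_ne u 0 with rfl | hu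
  · simp
  · exact ((integrable_min_mul_rpow_neg hY1 hY2 (inv_pos.mpr (abs_pos.mpr hu))).1.const_mul _).mono'
      (Measurable.aestronglyMeasurable (by fun_prop))
      (ae_of_all _ fun x => norm_compExp_I_mul_mul_le (by linarith) hu (hK x))

lemma norm_integral_compExp_I_mul_mul_le {Y K : ℝ} (hY1 : 1 < Y) (hY2 : Y < 2) {d : ℝ → ℝ}
    (hK : ∀ x, |d x| ≤ K * |x| ^ (-1 - Y)) (u : ℝ) :
    ‖∫ x : ℝ, compExp (Complex.I * u * x) * (d x : ℂ)‖ ≤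
      3 * K * (∫ x : ℝ, min |x| 1 * |x| ^ (-Y)) * |u| ^ Y := by
  rcases eq_or_ne u 0 with rfl | hu
  · simp [Real.zero_rpow (show Y ≠ 0 by linarith)]
  have hu' : 0 < |u| := abs_pos.mpr hu
  obtain ⟨hint, heq⟩ := integrable_min_mul_rpow_neg hY1 hY2 (inv_pos.mpr hu')
  refine (norm_integral_le_of_norm_le (hint.const_mul (3 * K * u ^ 2))
    (ae_of_all _ fun x => norm_compExp_I_mul_mul_le (by linarith) hu (hK x))).trans_eq ?_
  rw [integral_const_mul, heq, Real.inv_rpow hu'.le, Real.rpow_sub hu', Real.rpow_two, sq_abs]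
  field_simp

/-! ### The Lévy exponent -/

section LevyDensity

variable {Y Cp Cm : ℝ}

@[fun_prop]
lemma measurable_levyDensity (Y Cp Cm : ℝ) {q : ℝ → ℝ} (hq : Measurable q) :
    Measurable (levyDensity Y Cp Cm q) := by
  have : Measurable (fun x : ℝ => if 0 < x then Cp else if x < 0 then Cm else 0) :=
    .ite measurableSet_Ioi measurable_const
      (.ite measurableSet_Iio measurable_const measurable_const)
  unfold levyDensity
  fun_prop

lemma levyDensity_eq_one_add (Y Cp Cm : ℝ) (q : ℝ → ℝ) (x : ℝ) :
    levyDensity Y Cp Cm q x =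
      levyDensity Y Cp Cm (fun _ => 1) x + levyDensity Y Cp Cm (fun x => q x - 1) x := by
  unfold levyDensity
  ring

lemma levyDensity_nonneg (hCp : 0 ≤ Cp) (hCm : 0 ≤ Cm) {q : ℝ → ℝ} {x : ℝ} (hq : 0 ≤ q x) :
    0 ≤ levyDensity Y Cp Cm q x := by
  have : 0 ≤ (if 0 < x then Cp else if x < 0 then Cm else 0) := by split_ifs <;> linarith
  unfold levyDensity
  positivity

lemma abs_levyDensity_le (hCp : 0 ≤ Cp) (hCm : 0 ≤ Cm) (q : ℝ → ℝ) (x : ℝ) :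
    |levyDensity Y Cp Cm q x| ≤ (Cp + Cm) * (|q x| * |x| ^ (-1 - Y)) := by
  have hC : |if 0 < x then Cp else if x < 0 then Cm else 0| ≤ Cp + Cm := by
    split_ifs <;> rw [abs_of_nonneg (by positivity)] <;> linarith
  rw [levyDensity, abs_mul, abs_mul, abs_of_nonneg (by positivity : 0 ≤ |x| ^ (-1 - Y)), mul_assoc]
  gcongr

lemma abs_levyDensity_le_of_abs_le (hCp : 0 ≤ Cp) (hCm : 0 ≤ Cm) {q : ℝ → ℝ} {M : ℝ}
    (hM : ∀ x, |q x| ≤ M) (x : ℝ) :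
    |levyDensity Y Cp Cm q x| ≤ (Cp + Cm) * M * |x| ^ (-1 - Y) := by
  rw [mul_assoc]
  exact (abs_levyDensity_le hCp hCm q x).trans (by gcongr; exact hM x)

end LevyDensity

lemma I_mul_ofReal_cpow {Y u : ℝ} (hu : u ≠ 0) :
    (Complex.I * u) ^ (Y : ℂ) = ((|u| ^ Y : ℝ) : ℂ) *
      (Real.cos (π * Y / 2) + Complex.I * Real.sign u * Real.sin (π * Y / 2)) := by
  have hpolar :
      Complex.I * u = (|u| : ℝ) * Complex.exp ((π / 2 * Real.sign u : ℝ) * Complex.I) := by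
    rcases lt_or_gt_of_ne hu with h | h
    · rw [Real.sign_of_neg h, abs_of_neg h]
      push_cast
      rw [mul_neg_one, neg_mul (_ / _), Complex.exp_neg, Complex.exp_pi_div_two_mul_I,
        Complex.inv_I]
      ring
    · rw [Real.sign_of_pos h, abs_of_pos h]
      push_cast
      rw [mul_one, Complex.exp_pi_div_two_mul_I, mul_comm]
  have hu' : 0 < |u| := abs_pos.mpr hu
  have hsign : Real.sign u = 1 ∨ Real.sign u = -1 := (Real.sign_apply_eq_of_ne_zero u hu).symm
  have harg : (Complex.log (Complex.exp ((π / 2 * Real.sign u : ℝ) * Complex.I))) =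
      (π / 2 * Real.sign u : ℝ) * Complex.I := by
    apply Complex.log_exp <;> rcases hsign with h | h <;> simp [h] <;> linarith [Real.pi_pos]
  rw [hpolar, Complex.cpow_def_of_ne_zero (by simp [hu]), Complex.log_ofReal_mul hu' (by simp),
    harg, add_mul, Complex.exp_add, Real.rpow_def_of_pos hu']
  push_cast
  congr 1
  rw [show (π / 2 * Real.sign u : ℂ) * Complex.I * Y = (π * Y / 2 * Real.sign u : ℂ) * Complex.I
    by ring, Complex.exp_mul_I]
  rcases hsign with h | h <;> simp [h] <;> ring

lemma gamma_neg_pos {Y : ℝ} (hY1 : 1 < Y) (hY2 : Y < 2) : 0 < Real.Gamma (-Y) := by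
  have hGamma : Real.Gamma (2 - Y) = ((1 - Y) * -Y) * Real.Gamma (-Y) := by
    rw [show 2 - Y = (1 - Y) + 1 by ring, Real.Gamma_add_one (by linarith),
      show 1 - Y = -Y + 1 by ring, Real.Gamma_add_one (by linarith), mul_assoc]
  have hpos := Real.Gamma_pos_of_pos (show 0 < 2 - Y by linarith)
  rw [hGamma] at hpos
  exact (pos_iff_pos_of_mul_pos hpos).mp (by nlinarith)

lemma cos_pi_mul_div_two_neg {Y : ℝ} (hY1 : 1 < Y) (hY2 : Y < 2) : Real.cos (π * Y / 2) < 0 := by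
  apply Real.cos_neg_of_pi_div_two_lt_of_lt <;> nlinarith [Real.pi_pos]

lemma varsigma_rpow {Y Cp Cm : ℝ} (hY1 : 1 < Y) (hY2 : Y < 2) (hC : 0 ≤ Cp + Cm) :
    varsigma Y Cp Cm ^ Y = -((Cp + Cm) * Real.Gamma (-Y) * Real.cos (π * Y / 2)) := by
  have := gamma_neg_pos hY1 hY2
  rw [varsigma, ← Real.rpow_mul (by positivity), one_div, inv_mul_cancel₀ (by linarith),
    Real.rpow_one, abs_of_neg (cos_pi_mul_div_two_neg hY1 hY2)]
  ring

lemma integral_Ioi_compExp_I_mul {Y u : ℝ} (hY1 : 1 < Y) (hY2 : Y < 2) (hu : u ≠ 0) :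
    ∫ x in Ioi (0 : ℝ), compExp (Complex.I * u * x) * ((x ^ (-1 - Y) : ℝ) : ℂ) =
      (Complex.I * (-u : ℝ)) ^ (Y : ℂ) * Real.Gamma (-Y) := by
  rw [← integral_compExp_neg_mul hY1 hY2 (by simp) (by simp [hu])]
  simp

lemma stablePart_zero {Y : ℝ} (hY : Y ≠ 0) (Cp Cm : ℝ) : stablePart Y Cp Cm 0 = 0 := by
  simp [stablePart, hY]

lemma integral_compExp_mul_levyDensity_one {Y Cp Cm : ℝ} (hY1 : 1 < Y) (hY2 : Y < 2)
    (hCp : 0 ≤ Cp) (hCm : 0 ≤ Cm) (hC : 0 < Cp + Cm) (u : ℝ) :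
    ∫ x : ℝ, compExp (Complex.I * u * x) * (levyDensity Y Cp Cm (fun _ => 1) x : ℂ) =
      -stablePart Y Cp Cm u := by
  rcases eq_or_ne u 0 with rfl | hu
  · simp [stablePart_zero (show Y ≠ 0 by linarith)]
  have hint := integrable_compExp_I_mul_mul hY1 hY2
    (measurable_levyDensity Y Cp Cm (q := fun _ => 1) measurable_const)
    (abs_levyDensity_le_of_abs_le hCp hCm (M := 1) (by simp)) u
  have hpos : ∫ x in Ioi (0 : ℝ),
      compExp (Complex.I * u * x) * (levyDensity Y Cp Cm (fun _ => 1) x : ℂ) =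
        Cp * ((Complex.I * (-u : ℝ)) ^ (Y : ℂ) * Real.Gamma (-Y)) := by
    rw [← integral_Ioi_compExp_I_mul hY1 hY2 hu, ← integral_const_mul]
    refine setIntegral_congr_fun measurableSet_Ioi fun x (hx : 0 < x) => ?_
    simp only [levyDensity, hx, if_true, abs_of_pos hx, mul_one]
    push_cast
    ring
  have hneg : ∫ x in Iic (0 : ℝ),
      compExp (Complex.I * u * x) * (levyDensity Y Cp Cm (fun _ => 1) x : ℂ) =
        Cm * ((Complex.I * (u : ℝ)) ^ (Y : ℂ) * Real.Gamma (-Y)) := by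
    conv_rhs => rw [← neg_neg u]
    rw [← neg_zero, ← integral_comp_neg_Ioi,
      ← integral_Ioi_compExp_I_mul hY1 hY2 (neg_ne_zero.mpr hu), ← integral_const_mul]
    refine setIntegral_congr_fun measurableSet_Ioi fun x (hx : 0 < x) => ?_
    simp only [levyDensity, Left.neg_neg_iff, Left.neg_pos_iff, hx, hx.not_gt, if_true, if_false,
      abs_neg, abs_of_pos hx, mul_one]
    push_cast
    ring_nf
  rw [← intervalIntegral.integral_Iic_add_Ioi hint.integrableOn hint.integrableOn (b := 0), hpos,
    hneg, I_mul_ofReal_cpow hu, I_mul_ofReal_cpow (neg_ne_zero.mpr hu), stablePart,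
    varsigma_rpow hY1 hY2 hC.le, abs_neg, Real.sign_neg, Real.tan_eq_sin_div_cos]
  have hcos : (Real.cos (π * Y / 2) : ℂ) ≠ 0 := mod_cast (cos_pi_mul_div_two_neg hY1 hY2).ne
  have hC' : (Cp + Cm : ℂ) ≠ 0 := mod_cast hC.ne'
  simp only [Complex.ofReal_mul, Complex.ofReal_neg, Complex.ofReal_div, Complex.ofReal_add]
  field_simp
  ring

/-! ### Perturbations of the stable Lévy density -/

/-- A density `κ` which is of the order `|x|^{-1-Y}` of the `Y`-stable Lévy density, but only of the
order `|x|^{-Y}` up to an integrable error. The difference of the Lévy densities of `J` and of the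
stable process is of this kind. -/
structure IsLowerOrderDensity (Y : ℝ) (κ : ℝ → ℝ) : Prop where
  measurable : Measurable κ
  exists_abs_le : ∃ K, ∀ x, |κ x| ≤ K * |x| ^ (-1 - Y)
  exists_abs_le_add : ∃ r A, Integrable r ∧ (∀ x, 0 ≤ r x) ∧ 0 ≤ A ∧
    ∀ x, |κ x| ≤ r x + A * |x| ^ (-Y)

lemma abs_mul_rpow_le_abs_sub_mul_rpow_add {Y : ℝ} (hY : Y ≠ 0) (a α x : ℝ) :
    |a| * |x| ^ (-1 - Y) ≤ |a - α * x| * |x| ^ (-1 - Y) + |α| * |x| ^ (-Y) := by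
  have ha : |a| ≤ |a - α * x| + |α| * |x| := by
    rw [← abs_mul, ← sub_le_iff_le_add]
    exact abs_sub_abs_le_abs_sub a (α * x)
  rw [← mul_rpow_neg_one_sub hY (abs_nonneg x), ← mul_assoc, ← add_mul]
  gcongr

lemma exists_integrable_abs_mul_rpow_le {Y M : ℝ} (hY : 0 < Y) {d : ℝ → ℝ} (hM : ∀ x, |d x| ≤ M)
    {αp αm : ℝ}
    (hp : IntegrableOn (fun x => |d x - αp * x| * |x| ^ (-1 - Y)) (Ioc 0 1))
    (hm : IntegrableOn (fun x => |d x - αm * x| * |x| ^ (-1 - Y)) (Ico (-1) 0)) :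
    ∃ r A, Integrable r ∧ (∀ x, 0 ≤ r x) ∧ 0 ≤ A ∧
      ∀ x, |d x| * |x| ^ (-1 - Y) ≤ r x + A * |x| ^ (-Y) := by
  let rp := (Ioc (0 : ℝ) 1).indicator fun x => |d x - αp * x| * |x| ^ (-1 - Y)
  let rm := (Ico (-1 : ℝ) 0).indicator fun x => |d x - αm * x| * |x| ^ (-1 - Y)
  have hrp : ∀ x, 0 ≤ rp x := fun x => indicator_nonneg (fun _ _ => by positivity) x
  have hrm : ∀ x, 0 ≤ rm x := fun x => indicator_nonneg (fun _ _ => by positivity) x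
  have hM0 : 0 ≤ M := (abs_nonneg _).trans (hM 0)
  refine ⟨rp + rm, |αp| + |αm| + M, ((integrable_indicator_iff measurableSet_Ioc).mpr hp).add
    ((integrable_indicator_iff measurableSet_Ico).mpr hm), fun x => add_nonneg (hrp x) (hrm x),
    by positivity, fun x => ?_⟩
  have hx0 : 0 ≤ |x| ^ (-Y) := by positivity
  have hterms : 0 ≤ |αp| * |x| ^ (-Y) ∧ 0 ≤ |αm| * |x| ^ (-Y) ∧ 0 ≤ M * |x| ^ (-Y) :=
    ⟨by positivity, by positivity, by positivity⟩
  have hrpx := hrp x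
  have hrmx := hrm x
  rw [Pi.add_apply, add_mul, add_mul]
  rcases lt_or_ge 1 |x| with hx | hx
  · have : |x| ^ (-1 - Y) ≤ |x| ^ (-Y) := Real.rpow_le_rpow_of_exponent_le hx.le (by linarith)
    have := mul_le_mul (hM x) this (by positivity) hM0
    linarith
  rcases lt_trichotomy x 0 with h | rfl | h
  · have hrmx' : rm x = |d x - αm * x| * |x| ^ (-1 - Y) :=
      indicator_of_mem (show x ∈ Ico (-1) 0 from ⟨by linarith [neg_abs_le x], h⟩) _
    have := abs_mul_rpow_le_abs_sub_mul_rpow_add hY.ne' (d x) αm x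
    linarith
  · rw [abs_zero, Real.zero_rpow (by linarith : -1 - Y ≠ 0)]
    rw [abs_zero] at hterms
    linarith
  · have hrpx' : rp x = |d x - αp * x| * |x| ^ (-1 - Y) :=
      indicator_of_mem (show x ∈ Ioc 0 1 from ⟨h, by linarith [le_abs_self x]⟩) _
    have := abs_mul_rpow_le_abs_sub_mul_rpow_add hY.ne' (d x) αp x
    linarith

lemma isLowerOrderDensity_levyDensity {Y Cp Cm M : ℝ} (hY : 0 < Y) (hCp : 0 ≤ Cp) (hCm : 0 ≤ Cm)
    {d : ℝ → ℝ} (hd : Measurable d) (hM : ∀ x, |d x| ≤ M) {αp αm : ℝ}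
    (hp : IntegrableOn (fun x => |d x - αp * x| * |x| ^ (-1 - Y)) (Ioc 0 1))
    (hm : IntegrableOn (fun x => |d x - αm * x| * |x| ^ (-1 - Y)) (Ico (-1) 0)) :
    IsLowerOrderDensity Y (levyDensity Y Cp Cm d) where
  measurable := measurable_levyDensity Y Cp Cm hd
  exists_abs_le := ⟨_, abs_levyDensity_le_of_abs_le hCp hCm hM⟩
  exists_abs_le_add := by
    obtain ⟨r, A, hr, hr0, hA, hle⟩ := exists_integrable_abs_mul_rpow_le hY hM hp hm
    refine ⟨fun x => (Cp + Cm) * r x, (Cp + Cm) * A, hr.const_mul _,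
      fun x => mul_nonneg (by positivity) (hr0 x), by positivity, fun x => ?_⟩
    rw [mul_assoc, ← mul_add]
    exact (abs_levyDensity_le hCp hCm d x).trans (by gcongr; exact hle x)

namespace IsLowerOrderDensity

variable {Y : ℝ} {κ : ℝ → ℝ}

lemma integrable_abs_mul_abs (hκ : IsLowerOrderDensity Y κ) (hY1 : 1 < Y) (hY2 : Y < 2) :
    Integrable fun x => |x| * |κ x| := by
  obtain ⟨K, hK⟩ := hκ.exists_abs_le
  obtain ⟨r, A, hr, hr0, hA, hle⟩ := hκ.exists_abs_le_add
  have hK0 : 0 ≤ K := by simpa using (abs_nonneg _).trans (hK 1)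
  have hκm := hκ.measurable
  refine (hr.add ((integrable_min_mul_rpow_neg hY1 hY2 one_pos).1.const_mul (A + K))).mono'
    (Measurable.aestronglyMeasurable (by fun_prop)) (ae_of_all _ fun x => ?_)
  rw [Real.norm_of_nonneg (by positivity), Pi.add_apply]
  have hrx := hr0 x
  have hpow : 0 ≤ |x| ^ (-Y) := by positivity
  rcases le_or_gt |x| 1 with hx | hx
  · rw [min_eq_left hx]
    calc |x| * |κ x| ≤ |x| * (r x + A * |x| ^ (-Y)) := by gcongr; exact hle x
      _ ≤ r x + A * (|x| * |x| ^ (-Y)) := by nlinarith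
      _ ≤ _ := by gcongr; linarith
  · rw [min_eq_right hx.le, one_mul]
    calc |x| * |κ x| ≤ |x| * (K * |x| ^ (-1 - Y)) := by gcongr; exact hK x
      _ = K * |x| ^ (-Y) := by rw [← mul_rpow_neg_one_sub (by linarith) (abs_nonneg x)]; ring
      _ ≤ r x + (A + K) * |x| ^ (-Y) := by nlinarith

lemma integrable_abs_mul_min (hκ : IsLowerOrderDensity Y κ) (hY1 : 1 < Y) (hY2 : Y < 2) {e : ℝ}
    (he : 0 ≤ e) : Integrable fun x => |κ x| * min |x| e := by
  have hκm := hκ.measurable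
  refine (hκ.integrable_abs_mul_abs hY1 hY2).mono'
    (Measurable.aestronglyMeasurable (by fun_prop)) (ae_of_all _ fun x => ?_)
  rw [Real.norm_of_nonneg (by positivity), mul_comm]
  gcongr
  exact min_le_left _ _

lemma exists_integral_abs_mul_min_le (hκ : IsLowerOrderDensity Y κ) (hY1 : 1 < Y) (hY2 : Y < 2) :
    ∃ C, 0 ≤ C ∧ ∀ e, 0 < e → e ≤ 1 → ∫ x, |κ x| * min |x| e ≤ C * e ^ (2 - Y) := by
  obtain ⟨r, A, hr, hr0, hA, hle⟩ := hκ.exists_abs_le_add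
  have hr' : 0 ≤ ∫ x, r x := integral_nonneg hr0
  have : 0 ≤ ∫ x : ℝ, min |x| 1 * |x| ^ (-Y) := integral_nonneg fun x => by positivity
  refine ⟨(∫ x, r x) + A * ∫ x : ℝ, min |x| 1 * |x| ^ (-Y), by positivity, fun e he he1 => ?_⟩
  obtain ⟨hint, heq⟩ := integrable_min_mul_rpow_neg hY1 hY2 he
  have he2 : e ≤ e ^ (2 - Y) := by
    simpa using Real.rpow_le_rpow_of_exponent_ge he he1 (show 2 - Y ≤ 1 by linarith)
  calc ∫ x, |κ x| * min |x| e
      ≤ ∫ x, e * r x + A * (min |x| e * |x| ^ (-Y)) := by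
        refine integral_mono (hκ.integrable_abs_mul_min hY1 hY2 he.le)
          ((hr.const_mul e).add (hint.const_mul A)) fun x => ?_
        calc |κ x| * min |x| e ≤ (r x + A * |x| ^ (-Y)) * min |x| e := by gcongr; exact hle x
          _ = min |x| e * r x + A * (min |x| e * |x| ^ (-Y)) := by ring
          _ ≤ _ := by gcongr; exacts [hr0 x, min_le_right _ _]
    _ = e * (∫ x, r x) + A * (e ^ (2 - Y) * ∫ x : ℝ, min |x| 1 * |x| ^ (-Y)) := by
        rw [integral_add (hr.const_mul e) (hint.const_mul A), integral_const_mul,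
          integral_const_mul, heq]
    _ ≤ e ^ (2 - Y) * (∫ x, r x) + A * (e ^ (2 - Y) * ∫ x : ℝ, min |x| 1 * |x| ^ (-Y)) := by gcongr
    _ = _ := by ring

end IsLowerOrderDensity

/-- The exponent `χ(u) = ∫ (e^{iux} − 1) κ(x) dx` of the jumps with density `κ`, uncompensated. -/
def jumpExponent (κ : ℝ → ℝ) (u : ℝ) : ℂ :=
  ∫ x : ℝ, (Complex.exp (Complex.I * u * x) - 1) * (κ x : ℂ)

section JumpExponent

variable {κ : ℝ → ℝ}

lemma norm_exp_I_mul_mul_sub_one_le (u x : ℝ) :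
    ‖Complex.exp (Complex.I * u * x) - 1‖ ≤ |u| * |x| := by
  simpa [mul_assoc, abs_mul] using Real.norm_exp_I_mul_ofReal_sub_one_le (x := u * x)

lemma norm_exp_I_mul_mul_sub_one_mul_le (u x k : ℝ) :
    ‖(Complex.exp (Complex.I * u * x) - 1) * (k : ℂ)‖ ≤ |u| * (|x| * |k|) := by
  rw [norm_mul, Complex.norm_real, Real.norm_eq_abs, ← mul_assoc]
  gcongr
  exact norm_exp_I_mul_mul_sub_one_le u x

lemma integrable_exp_sub_one_mul (hκ : Measurable κ) (hint : Integrable fun x => |x| * |κ x|)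
    (u : ℝ) : Integrable fun x : ℝ => (Complex.exp (Complex.I * u * x) - 1) * (κ x : ℂ) :=
  (hint.const_mul |u|).mono' (Measurable.aestronglyMeasurable (by fun_prop))
    (ae_of_all _ fun x => norm_exp_I_mul_mul_sub_one_mul_le u x (κ x))

lemma norm_jumpExponent_le (hint : Integrable fun x => |x| * |κ x|) (u : ℝ) :
    ‖jumpExponent κ u‖ ≤ |u| * ∫ x, |x| * |κ x| := by
  rw [← integral_const_mul]
  exact norm_integral_le_of_norm_le (hint.const_mul |u|)
    (ae_of_all _ fun x => norm_exp_I_mul_mul_sub_one_mul_le u x (κ x))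

@[fun_prop]
lemma measurable_jumpExponent (hκ : Measurable κ) : Measurable (jumpExponent κ) := by
  refine (StronglyMeasurable.integral_prod_right (Measurable.stronglyMeasurable ?_)).measurable
  fun_prop

lemma integral_compExp_mul_eq_jumpExponent_sub (hκ : Measurable κ)
    (hint : Integrable fun x => |x| * |κ x|) (u : ℝ) :
    ∫ x : ℝ, compExp (Complex.I * u * x) * (κ x : ℂ) =
      jumpExponent κ u - Complex.I * u * (∫ x, x * κ x : ℝ) := by
  have hmean : Integrable fun x => x * κ x :=
    hint.mono' (Measurable.aestronglyMeasurable (by fun_prop)) (ae_of_all _ fun x => by simp)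
  have hmean' : Integrable fun x => ((x * κ x : ℝ) : ℂ) := hmean.ofReal
  rw [jumpExponent, ← integral_complex_ofReal, ← integral_const_mul,
    ← integral_sub (integrable_exp_sub_one_mul hκ hint u) (hmean'.const_mul _)]
  congr with x
  simp only [compExp]
  push_cast
  ring

end JumpExponent

/-- The drift of `J` after compensating all its jumps rather than only those of size at most `1`. -/
def compensatedDrift (b Y Cp Cm : ℝ) (q : ℝ → ℝ) : ℝ :=
  b + ∫ x, if |x| ≤ 1 then 0 else x * levyDensity Y Cp Cm q x

section PsiJ

variable {Y Cp Cm : ℝ} {q : ℝ → ℝ}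

lemma integrable_ite_mul_of_abs_le {K : ℝ} (hY1 : 1 < Y) (hY2 : Y < 2) {d : ℝ → ℝ}
    (hd : Measurable d) (hK : ∀ x, |d x| ≤ K * |x| ^ (-1 - Y)) :
    Integrable fun x : ℝ => if |x| ≤ 1 then 0 else x * d x := by
  have hmeas : Measurable fun x : ℝ => if |x| ≤ 1 then 0 else x * d x :=
    .ite (measurableSet_le (by fun_prop) measurable_const) measurable_const (by fun_prop)
  have hK0 : 0 ≤ K := by simpa using (abs_nonneg _).trans (hK 1)
  refine ((integrable_min_mul_rpow_neg hY1 hY2 one_pos).1.const_mul K).mono'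
    hmeas.aestronglyMeasurable (ae_of_all _ fun x => ?_)
  split_ifs with hx
  · rw [norm_zero]
    positivity
  · rw [min_eq_right (not_le.mp hx).le, one_mul, norm_mul, Real.norm_eq_abs, Real.norm_eq_abs,
      ← mul_rpow_neg_one_sub (by linarith) (abs_nonneg x), mul_left_comm]
    gcongr
    exact hK x

lemma psiJ_eq_integral_compExp (b : ℝ) (hY1 : 1 < Y) (hY2 : Y < 2) (hCp : 0 ≤ Cp) (hCm : 0 ≤ Cm)
    (hqm : Measurable q) (hq0 : ∀ x, 0 ≤ q x) {M : ℝ} (hM : ∀ x, q x ≤ M) (u : ℝ) :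
    psiJ b Y Cp Cm q u = Complex.I * compensatedDrift b Y Cp Cm q * u +
      ∫ x : ℝ, compExp (Complex.I * u * x) * (levyDensity Y Cp Cm q x : ℂ) := by
  have hm := measurable_levyDensity Y Cp Cm hqm
  have hle := abs_levyDensity_le_of_abs_le (Y := Y) hCp hCm (q := q) (M := M)
    (fun x => by rw [abs_of_nonneg (hq0 x)]; exact hM x)
  have hlarge :
      Integrable fun x => ((if |x| ≤ 1 then 0 else x * levyDensity Y Cp Cm q x : ℝ) : ℂ) :=
    (integrable_ite_mul_of_abs_le hY1 hY2 hm hle).ofReal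
  have hsplit : ∀ x : ℝ, (ENNReal.ofReal (levyDensity Y Cp Cm q x)).toReal •
      (Complex.exp (Complex.I * u * x) - 1 - (if |x| ≤ 1 then Complex.I * u * x else 0)) =
      compExp (Complex.I * u * x) * (levyDensity Y Cp Cm q x : ℂ) +
        Complex.I * u * ((if |x| ≤ 1 then 0 else x * levyDensity Y Cp Cm q x : ℝ) : ℂ) := by
    intro x
    rw [ENNReal.toReal_ofReal (levyDensity_nonneg hCp hCm (hq0 x)), compExp, Complex.real_smul]
    split_ifs <;> push_cast <;> ring
  rw [psiJ, levyMeasure, integral_withDensity_eq_integral_toReal_smul (by fun_prop)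
    (ae_of_all _ fun x => ENNReal.ofReal_lt_top)]
  simp_rw [hsplit]
  rw [integral_add (integrable_compExp_I_mul_mul hY1 hY2 hm hle u)
    (hlarge.const_mul _), integral_const_mul, integral_complex_ofReal, compensatedDrift]
  push_cast
  ring

lemma psiJ_eq (b : ℝ) (hY1 : 1 < Y) (hY2 : Y < 2) (hCp : 0 ≤ Cp) (hCm : 0 ≤ Cm) (hC : 0 < Cp + Cm)
    (hqm : Measurable q) (hq0 : ∀ x, 0 ≤ q x) {M : ℝ} (hM : ∀ x, q x ≤ M)
    (hκ : IsLowerOrderDensity Y (levyDensity Y Cp Cm fun x => q x - 1)) (u : ℝ) :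
    psiJ b Y Cp Cm q u =
      Complex.I * (compensatedDrift b Y Cp Cm q -
        ∫ x, x * levyDensity Y Cp Cm (fun x => q x - 1) x : ℝ) * u
        - stablePart Y Cp Cm u + jumpExponent (levyDensity Y Cp Cm fun x => q x - 1) u := by
  obtain ⟨K, hK⟩ := hκ.exists_abs_le
  rw [psiJ_eq_integral_compExp b hY1 hY2 hCp hCm hqm hq0 hM u]
  simp_rw [levyDensity_eq_one_add Y Cp Cm q, Complex.ofReal_add, mul_add]
  rw [integral_add
    (integrable_compExp_I_mul_mul hY1 hY2 (measurable_levyDensity Y Cp Cm measurable_const)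
      (abs_levyDensity_le_of_abs_le hCp hCm (M := 1) (by simp)) u)
    (integrable_compExp_I_mul_mul hY1 hY2 hκ.measurable hK u),
    integral_compExp_mul_levyDensity_one hY1 hY2 hCp hCm hC,
    integral_compExp_mul_eq_jumpExponent_sub hκ.measurable (hκ.integrable_abs_mul_abs hY1 hY2)]
  push_cast
  ring

end PsiJ

/-! ### Laws with a stable-like characteristic exponent -/

/-- The law `μ` is that of a drift `a` plus a noise with characteristic exponent bounded by
`A|u|^Y + Bu²`. This is all that is used about the infinitely divisible laws of the theorem to
control their tails and their means. -/
def HasStableLikeExponent (Y A B a : ℝ) (μ : Measure ℝ) : Prop :=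
  ∃ ρ : ℝ → ℂ, (∀ u, charFun μ u = Complex.exp (Complex.I * a * u + ρ u)) ∧
    ∀ u, ‖ρ u‖ ≤ A * |u| ^ Y + B * u ^ 2

lemma HasStableLikeExponent.mono {Y A A' B B' a : ℝ} {μ : Measure ℝ} (hA : A ≤ A') (hB : B ≤ B')
    (hμ : HasStableLikeExponent Y A B a μ) : HasStableLikeExponent Y A' B' a μ := by
  obtain ⟨ρ, hcharFun, hρ⟩ := hμ
  refine ⟨ρ, hcharFun, fun u => (hρ u).trans ?_⟩
  gcongr

lemma isLittleO_abs_rpow_id {p : ℝ} (hp : 1 < p) : (fun u : ℝ => |u| ^ p) =o[𝓝 0] fun u => u := by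
  have hderiv := Real.hasDerivAt_rpow_const (x := 0) (p := p) (Or.inr hp.le)
  rw [hasDerivAt_iff_isLittleO] at hderiv
  have hp0 : p ≠ 0 := by linarith
  have hp1 : p - 1 ≠ 0 := by linarith
  simp only [Real.zero_rpow hp0, Real.zero_rpow hp1, sub_zero, mul_zero, smul_zero] at hderiv
  have habs : Tendsto (fun u : ℝ => |u|) (𝓝 0) (𝓝 0) := by
    simpa using (continuous_abs (G := ℝ)).tendsto 0
  exact isLittleO_norm_right.mp (hderiv.comp_tendsto habs)

lemma integral_Ioi_max_rpow_neg {Y R : ℝ} (hY : 1 < Y) (hR : 0 < R) :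
    IntegrableOn (fun t => (max t R) ^ (-Y)) (Ioi 0) ∧
      ∫ t in Ioi 0, (max t R) ^ (-Y) = Y / (Y - 1) * R ^ (1 - Y) := by
  have hsmall : EqOn (fun _ => R ^ (-Y)) (fun t => (max t R) ^ (-Y)) (Ioc 0 R) := fun t ht => by
    simp only
    rw [max_eq_right ht.2]
  have hlarge : EqOn (fun t => t ^ (-Y)) (fun t => (max t R) ^ (-Y)) (Ioi R) :=
    fun t (ht : R < t) => by
      simp only
      rw [max_eq_left ht.le]
  have hint₁ : IntegrableOn (fun t => (max t R) ^ (-Y)) (Ioc 0 R) :=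
    IntegrableOn.congr_fun (integrableOn_const (by simp)) hsmall measurableSet_Ioc
  have hint₂ : IntegrableOn (fun t => (max t R) ^ (-Y)) (Ioi R) :=
    (integrableOn_Ioi_rpow_of_lt (by linarith) hR).congr_fun hlarge measurableSet_Ioi
  rw [← Ioc_union_Ioi_eq_Ioi hR.le]
  refine ⟨hint₁.union hint₂, ?_⟩
  rw [setIntegral_union (Ioc_disjoint_Ioi le_rfl) measurableSet_Ioi hint₁ hint₂,
    ← setIntegral_congr_fun measurableSet_Ioc hsmall,
    ← setIntegral_congr_fun measurableSet_Ioi hlarge, setIntegral_const,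
    integral_Ioi_rpow_of_lt (by linarith) hR, Real.volume_real_Ioc_of_le hR.le, smul_eq_mul,
    sub_zero, show R * R ^ (-Y) = R ^ (1 - Y) by
      rw [sub_eq_add_neg, Real.rpow_add hR, Real.rpow_one],
    show -Y + 1 = 1 - Y by ring]
  have h1 : Y - 1 ≠ 0 := by linarith
  have h2 : 1 - Y ≠ 0 := by linarith
  field_simp
  ring

lemma measurableSet_lt_abs (R : ℝ) : MeasurableSet {x : ℝ | R < |x|} :=
  measurableSet_lt measurable_const (by fun_prop)

lemma setIntegral_abs_le_of_measureReal_le {μ : Measure ℝ} [IsFiniteMeasure μ] {Y T R : ℝ}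
    (hY : 1 < Y) (hT : 0 ≤ T) (hR : 0 < R)
    (htail : ∀ r, R ≤ r → μ.real {x | r < |x|} ≤ T * r ^ (-Y)) :
    IntegrableOn (fun x => |x|) {x | R < |x|} μ ∧
      ∫ x in {x | R < |x|}, |x| ∂μ ≤ T * (Y / (Y - 1) * R ^ (1 - Y)) := by
  have hmax : ∀ t, 0 < max t R := fun t => lt_max_of_lt_right hR
  obtain ⟨hint, hval⟩ := integral_Ioi_max_rpow_neg hY hR
  have hpow : ∀ t, 0 ≤ T * (max t R) ^ (-Y) :=
    fun t => mul_nonneg hT (Real.rpow_nonneg (hmax t).le _)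
  have hlin : ∫⁻ x in {x | R < |x|}, ENNReal.ofReal |x| ∂μ ≤
      ENNReal.ofReal (T * (Y / (Y - 1) * R ^ (1 - Y))) := by
    rw [lintegral_eq_lintegral_meas_lt _ (ae_of_all _ abs_nonneg) (by fun_prop), ← hval,
      ← integral_const_mul,
      ofReal_integral_eq_lintegral_ofReal (hint.const_mul T) (ae_of_all _ hpow)]
    refine lintegral_mono fun t => ?_
    rw [Measure.restrict_apply (measurableSet_lt_abs t)]
    have hinter : {x : ℝ | t < |x|} ∩ {x | R < |x|} = {x | max t R < |x|} := by
      ext x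
      change t < |x| ∧ R < |x| ↔ max t R < |x|
      exact max_lt_iff.symm
    rw [hinter, ← ofReal_measureReal]
    exact ENNReal.ofReal_le_ofReal (htail _ (le_max_right _ _))
  refine ⟨⟨by fun_prop, ?_⟩, ?_⟩
  · rw [hasFiniteIntegral_iff_ofReal (ae_of_all _ abs_nonneg)]
    exact hlin.trans_lt ENNReal.ofReal_lt_top
  · rw [integral_eq_lintegral_of_nonneg_ae (ae_of_all _ abs_nonneg) (by fun_prop)]
    refine ENNReal.toReal_le_of_le_ofReal (mul_nonneg hT ?_) hlin
    rw [← hval]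
    exact integral_nonneg fun t => Real.rpow_nonneg (hmax t).le _

lemma integral_abs_le_add_setIntegral {μ : Measure ℝ} [IsProbabilityMeasure μ] {R : ℝ} (hR : 0 ≤ R)
    (hint : IntegrableOn (fun x => |x|) {x | R < |x|} μ) :
    Integrable (fun x => |x|) μ ∧ ∫ x, |x| ∂μ ≤ R + ∫ x in {x | R < |x|}, |x| ∂μ := by
  have hind := (integrable_indicator_iff (measurableSet_lt_abs R)).mpr hint
  have hle : ∀ x : ℝ, |x| ≤ R + {x : ℝ | R < |x|}.indicator (fun x => |x|) x := by
    intro x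
    rw [indicator_apply]
    split_ifs with hx
    · linarith
    · simpa using hx
  have hsum := (integrable_const (μ := μ) R).add hind
  have habs : Integrable (fun x => |x|) μ :=
    hsum.mono' (by fun_prop) (ae_of_all _ fun x => by simpa using hle x)
  refine ⟨habs, (integral_mono habs hsum hle).trans_eq ?_⟩
  rw [integral_add' (integrable_const R) hind, integral_indicator (measurableSet_lt_abs R)]
  simp

namespace HasStableLikeExponent

variable {Y A B a : ℝ} {μ : Measure ℝ} [IsProbabilityMeasure μ]

lemma measureReal_lt_abs_le_of_drift_zero (h : HasStableLikeExponent Y A B 0 μ) (hY0 : 0 ≤ Y)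
    (hY2 : Y ≤ 2) (hA : 0 ≤ A) (hB : 0 ≤ B) {r : ℝ} (hr : 0 < r) :
    μ.real {x | r < |x|} ≤ 16 * (A * r ^ (-Y) + B * r⁻¹ ^ 2) := by
  obtain ⟨ρ, hcf, hρ⟩ := h
  simp only [Complex.ofReal_zero, mul_zero, zero_mul, zero_add] at hcf
  have hre : ∀ u, (ρ u).re ≤ 0 := fun u => by
    simpa [hcf, Complex.norm_exp] using norm_charFun_le_one (μ := μ) u
  have hle : ∀ u ∈ Set.uIoc (-2 * r⁻¹) (2 * r⁻¹),
      ‖1 - charFun μ u‖ ≤ 8 * (A * r ^ (-Y) + B * r⁻¹ ^ 2) := by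
    intro u hu
    have hu2 : |u| ≤ 2 * r⁻¹ := by
      rw [Set.uIoc_of_le (by linarith [inv_pos.mpr hr])] at hu
      exact abs_le.mpr ⟨by linarith [hu.1], hu.2⟩
    have huY : |u| ^ Y ≤ 4 * r ^ (-Y) := by
      calc |u| ^ Y ≤ (2 * r⁻¹) ^ Y := by gcongr
        _ = 2 ^ Y * r ^ (-Y) := by
          rw [Real.mul_rpow (by norm_num) (by positivity), Real.inv_rpow hr.le, Real.rpow_neg hr.le]
        _ ≤ 2 ^ (2 : ℝ) * r ^ (-Y) := by gcongr; norm_num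
        _ = 4 * r ^ (-Y) := by norm_num
    have husq : u ^ 2 ≤ 4 * r⁻¹ ^ 2 := by
      rw [← sq_abs u, show 4 * r⁻¹ ^ 2 = (2 * r⁻¹) ^ 2 by ring]
      gcongr
    rw [hcf, norm_sub_rev]
    calc ‖Complex.exp (ρ u) - 1‖ ≤ 2 * ‖ρ u‖ := (norm_exp_sub_one_le_two_mul_min (hre u)).trans
          (by gcongr; exact min_le_left _ _)
      _ ≤ 2 * (A * (4 * r ^ (-Y)) + B * (4 * r⁻¹ ^ 2)) := by
          gcongr
          exact (hρ u).trans (by gcongr)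
      _ = _ := by ring
  have hint := intervalIntegral.norm_integral_le_of_norm_le_const hle
  rw [show 2 * r⁻¹ - -2 * r⁻¹ = 4 * r⁻¹ by ring, abs_of_pos (by positivity)] at hint
  calc _ ≤ 2⁻¹ * r * (8 * (A * r ^ (-Y) + B * r⁻¹ ^ 2) * (4 * r⁻¹)) :=
        (measureReal_abs_gt_le_integral_charFun hr).trans (by gcongr)
    _ = _ := by field_simp; ring

lemma measureReal_lt_abs_sub_le (h : HasStableLikeExponent Y A B a μ) (hY0 : 0 ≤ Y) (hY2 : Y ≤ 2)
    (hA : 0 ≤ A) (hB : 0 ≤ B) {r : ℝ} (hr : 0 < r) :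
    μ.real {x | r < |x - a|} ≤ 16 * (A * r ^ (-Y) + B * r⁻¹ ^ 2) := by
  obtain ⟨ρ, hcf, hρ⟩ := h
  have hcentred : HasStableLikeExponent Y A B 0 (μ.map (· + -a)) := by
    refine ⟨ρ, fun u => ?_, hρ⟩
    rw [charFun_map_add_const, hcf, ← Complex.exp_add]
    congr 1
    simp only [RCLike.inner_apply, Real.ringHom_apply, mul_neg, Complex.ofReal_neg,
      Complex.ofReal_mul, Complex.ofReal_zero, mul_zero, zero_mul, zero_add]
    ring
  have : IsProbabilityMeasure (μ.map (· + -a)) := Measure.isProbabilityMeasure_map (by fun_prop)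
  have := hcentred.measureReal_lt_abs_le_of_drift_zero hY0 hY2 hA hB hr
  rw [map_measureReal_apply (by fun_prop) (measurableSet_lt_abs r)] at this
  simpa only [preimage_ofPred_eq, ← sub_eq_add_neg] using this

lemma integral_id_eq (h : HasStableLikeExponent Y A B a μ) (hY : 1 < Y)
    (hint : Integrable (fun x => x) μ) : ∫ x, x ∂μ = a := by
  obtain ⟨ρ, hcf, hρ⟩ := h
  have hρ0 : ρ 0 = 0 := by simpa [Real.zero_rpow (show Y ≠ 0 by linarith)] using hρ 0
  have hρo : ρ =o[𝓝 0] fun u : ℝ => u := by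
    have hsq : (fun u : ℝ => u ^ 2) =o[𝓝 0] fun u => u := by
      simpa using isLittleO_abs_rpow_id (p := 2) one_lt_two
    exact (isBigO_of_le _ fun u => (hρ u).trans (le_abs_self _)).trans_isLittleO
      (((isLittleO_abs_rpow_id hY).const_mul_left A).add (hsq.const_mul_left B))
  have hρd : HasDerivAt ρ 0 0 := by
    rw [hasDerivAt_iff_isLittleO]
    simpa [hρ0] using hρo
  have hderiv : HasDerivAt (charFun μ) (Complex.I * a) 0 := by
    rw [funext hcf]
    simpa [hρ0] using
      (((Complex.ofRealCLM.hasDerivAt (x := 0)).const_mul (Complex.I * a)).add hρd).cexp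
  have hmoment := iteratedDeriv_charFun_zero (μ := μ) (n := 1)
    (by rw [Nat.cast_one, memLp_one_iff_integrable]; exact hint)
  rw [iteratedDeriv_one, hderiv.deriv] at hmoment
  simp only [pow_one] at hmoment
  exact_mod_cast (mul_left_cancel₀ Complex.I_ne_zero hmoment).symm

end HasStableLikeExponent

lemma div_rpow_le {r c p : ℝ} (hr : 0 < r) (hc : 1 ≤ c) (hp : -2 ≤ p) :
    (r / c) ^ p ≤ c ^ 2 * r ^ p := by
  have hc0 : 0 < c := by linarith
  rw [div_eq_mul_inv, Real.mul_rpow hr.le (by positivity), Real.inv_rpow hc0.le,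
    ← Real.rpow_neg hc0.le, mul_comm, ← Real.rpow_natCast]
  gcongr
  push_cast
  linarith

/-- The law `μ` charges `{|x| > r}` with mass at most `T·h·r^{−Y}`, as a `Y`-stable law at time `h`
does, whenever `r ≥ e/4`. -/
def HasStableTail (Y T h e : ℝ) (μ : Measure ℝ) : Prop :=
  ∀ r, e / 4 ≤ r → μ.real {x | r < |x|} ≤ T * h * r ^ (-Y)

lemma rpow_mul_inv_sq_le {Y h e r : ℝ} (hY0 : 0 ≤ Y) (hY2 : Y < 2) (hh : 0 < h) (he : 0 < e)
    (hhe : h ≤ e ^ 2) (hr : e / 4 ≤ r) :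
    h ^ (2 - Y / 2) * (r / 2)⁻¹ ^ 2 ≤ 64 * (h * r ^ (-Y)) := by
  have hr0 : 0 < r := by linarith
  have hpow : h ^ (1 - Y / 2) ≤ 16 * (r ^ 2 * r ^ (-Y)) := by
    calc h ^ (1 - Y / 2) ≤ ((4 * r) ^ 2) ^ (1 - Y / 2) :=
          Real.rpow_le_rpow hh.le (hhe.trans (by gcongr; linarith)) (by linarith)
      _ = 4 ^ (2 - Y) * (r ^ 2 * r ^ (-Y)) := by
        rw [← Real.rpow_natCast, ← Real.rpow_natCast, ← Real.rpow_mul (by positivity),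
          ← Real.rpow_add hr0, Nat.cast_ofNat, ← sub_eq_add_neg,
          ← Real.mul_rpow (by norm_num) hr0.le, mul_sub, mul_one, mul_div_cancel₀ _ two_ne_zero]
      _ ≤ 4 ^ (2 : ℝ) * (r ^ 2 * r ^ (-Y)) := by
        gcongr
        · norm_num
        · linarith
      _ = _ := by norm_num
  calc h ^ (2 - Y / 2) * (r / 2)⁻¹ ^ 2 = h * h ^ (1 - Y / 2) * (r / 2)⁻¹ ^ 2 := by
        rw [show 2 - Y / 2 = 1 + (1 - Y / 2) by ring, Real.rpow_add hh, Real.rpow_one]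
    _ ≤ h * (16 * (r ^ 2 * r ^ (-Y))) * (r / 2)⁻¹ ^ 2 := by gcongr
    _ = _ := by field_simp; norm_num

lemma HasStableLikeExponent.hasStableTail {Y K h e a : ℝ} {μ : Measure ℝ} [IsProbabilityMeasure μ]
    (hμ : HasStableLikeExponent Y (K * h) (K * h ^ (2 - Y / 2)) a μ) (hY0 : 0 ≤ Y) (hY2 : Y < 2)
    (hK : 0 ≤ K) (hh : 0 < h) (he : 0 < e) (hhe : h ≤ e ^ 2) (ha : |a| ≤ e / 8) :
    HasStableTail Y (1088 * K) h e μ := by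
  intro r hr
  have hr0 : 0 < r := by linarith
  have hsub : {x | r < |x|} ⊆ {x | r / 2 < |x - a|} := fun x (hx : r < |x|) => by
    have := abs_sub_abs_le_abs_sub x a
    change r / 2 < |x - a|
    linarith
  calc μ.real {x | r < |x|} ≤ μ.real {x | r / 2 < |x - a|} :=
        measureReal_mono hsub (measure_ne_top _ _)
    _ ≤ 16 * (K * h * (r / 2) ^ (-Y) + K * h ^ (2 - Y / 2) * (r / 2)⁻¹ ^ 2) :=
        hμ.measureReal_lt_abs_sub_le hY0 hY2.le (by positivity) (by positivity) (by positivity)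
    _ ≤ 16 * (K * h * (2 ^ 2 * r ^ (-Y)) + K * (64 * (h * r ^ (-Y)))) := by
        rw [mul_assoc K (h ^ _)]
        gcongr 16 * (K * h * ?_ + K * ?_)
        · exact div_rpow_le hr0 one_le_two (by linarith)
        · exact rpow_mul_inv_sq_le hY0 hY2 hh he hhe hr
    _ = _ := by ring

namespace HasStableTail

variable {Y T h e : ℝ} {μ : Measure ℝ}

lemma measureReal_le (hμ : HasStableTail Y T h e μ) (hY : Y ≤ 2) (hT : 0 ≤ T) (hh : 0 ≤ h)
    (he : 0 < e) : μ.real {x | e / 4 < |x|} ≤ 16 * T * (h * e ^ (-Y)) := by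
  calc _ ≤ T * h * (e / 4) ^ (-Y) := hμ _ le_rfl
    _ ≤ T * h * (4 ^ 2 * e ^ (-Y)) := by
        gcongr
        exact div_rpow_le he (by norm_num) (by linarith)
    _ = _ := by ring

variable [IsProbabilityMeasure μ]

lemma setIntegral_abs_le (hμ : HasStableTail Y T h e μ) (hY1 : 1 < Y) (hY2 : Y < 2) (hT : 0 ≤ T)
    (hh : 0 ≤ h) (he : 0 < e) : IntegrableOn (fun x => |x|) {x | e / 4 < |x|} μ ∧
      ∫ x in {x | e / 4 < |x|}, |x| ∂μ ≤ 16 * (Y / (Y - 1)) * T * (h * e ^ (1 - Y)) := by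
  obtain ⟨hint, hle⟩ :=
    setIntegral_abs_le_of_measureReal_le hY1 (mul_nonneg hT hh) (by positivity) hμ
  have : 0 ≤ Y / (Y - 1) := div_nonneg (by linarith) (by linarith)
  refine ⟨hint, ?_⟩
  calc _ ≤ T * h * (Y / (Y - 1) * (e / 4) ^ (1 - Y)) := hle
    _ ≤ T * h * (Y / (Y - 1) * (4 ^ 2 * e ^ (1 - Y))) := by
        gcongr
        exact div_rpow_le he (by norm_num) (by linarith)
    _ = _ := by ring

lemma integral_abs_le (hμ : HasStableTail Y T h e μ) (hY1 : 1 < Y) (hY2 : Y < 2) (hT : 0 ≤ T)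
    (hh : 0 ≤ h) (he : 0 < e) (he1 : e ≤ 1) (hhe : h ≤ e ^ 2) :
    Integrable (fun x => |x|) μ ∧ ∫ x, |x| ∂μ ≤ (1 + 16 * (Y / (Y - 1)) * T) * e := by
  obtain ⟨hset, hset_le⟩ := hμ.setIntegral_abs_le hY1 hY2 hT hh he
  obtain ⟨hint, hle⟩ := integral_abs_le_add_setIntegral (by positivity) hset
  have hpow : h * e ^ (1 - Y) ≤ e := by
    calc h * e ^ (1 - Y) ≤ e ^ 2 * e ^ (-1 : ℝ) := by
          gcongr ?_ * ?_
          exact Real.rpow_le_rpow_of_exponent_ge he he1 (by linarith)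
      _ = e := by rw [Real.rpow_neg_one]; field_simp
  have : 0 ≤ Y / (Y - 1) := div_nonneg (by linarith) (by linarith)
  have := mul_le_mul_of_nonneg_left hpow (show 0 ≤ 16 * (Y / (Y - 1)) * T by positivity)
  exact ⟨hint, by linarith⟩

end HasStableTail

/-! ### Regularisation by a Gaussian law -/

lemma gaussianReal_zero_one_map_const_mul {c : ℝ} {v : ℝ≥0} (hv : v = c ^ 2) :
    (gaussianReal 0 1).map (c * ·) = gaussianReal 0 v := by
  rw [gaussianReal_map_const_mul, mul_zero]
  congr 1
  ext
  simp [hv]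

lemma integral_abs_pow_gaussianReal (n : ℕ) (v : ℝ≥0) :
    Integrable (fun w => |w| ^ n) (gaussianReal 0 v) ∧
      ∫ w, |w| ^ n ∂gaussianReal 0 v = √v ^ n * ∫ w, |w| ^ n ∂gaussianReal 0 1 := by
  refine ⟨(memLp_id_gaussianReal (μ := 0) (v := v) n).integrable_norm_pow', ?_⟩
  rw [← gaussianReal_zero_one_map_const_mul (Real.sq_sqrt v.coe_nonneg).symm,
    integral_map (by fun_prop) (by fun_prop)]
  simp_rw [abs_mul, mul_pow, abs_of_nonneg (Real.sqrt_nonneg _)]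
  exact integral_const_mul _ _

lemma exp_neg_le_div_pow_three {y : ℝ} (hy : 0 < y) : Real.exp (-y) ≤ 6 / y ^ 3 := by
  have hexp := Real.pow_div_factorial_le_exp y hy.le 3
  rw [div_le_iff₀ (by positivity)] at hexp
  rw [Real.exp_neg, inv_eq_one_div, div_le_div_iff₀ (Real.exp_pos _) (by positivity)]
  norm_num [Nat.factorial] at hexp
  linarith

lemma gaussianReal_le_of_forall_le_abs {v : ℝ≥0} (hv : v ≠ 0) {s : Set ℝ} {ℓ m : ℝ} (hm : 0 ≤ m)
    (hvol : volume s ≤ ENNReal.ofReal ℓ) (hs : ∀ w ∈ s, m ≤ |w|) :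
    gaussianReal 0 v s ≤ ENNReal.ofReal ((√v)⁻¹ * Real.exp (-(m ^ 2 / (2 * v))) * ℓ) := by
  have hv0 : (0 : ℝ) < v := by positivity
  have hpdf : ∀ w ∈ s, gaussianPDF 0 v w ≤
      ENNReal.ofReal ((√v)⁻¹ * Real.exp (-(m ^ 2 / (2 * v)))) := fun w hw => by
    have hsqrt : √v ≤ √(2 * π * v) := by
      apply Real.sqrt_le_sqrt
      nlinarith [Real.pi_gt_three]
    have : 0 < √(v : ℝ) := Real.sqrt_pos.mpr hv0
    have hsq : m ^ 2 ≤ (w - 0) ^ 2 := by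
      rw [sub_zero, ← sq_abs w]
      gcongr
      exact hs w hw
    rw [gaussianPDF, gaussianPDFReal, neg_div]
    gcongr
  rw [gaussianReal_apply 0 hv, ENNReal.ofReal_mul (by positivity)]
  calc _ ≤ ∫⁻ _ in s, ENNReal.ofReal ((√v)⁻¹ * Real.exp (-(m ^ 2 / (2 * v)))) :=
        setLIntegral_mono (by fun_prop) hpdf
    _ ≤ _ := by
        rw [setLIntegral_const]
        gcongr

lemma measurableSet_abs_abs_sub_le (e d : ℝ) : MeasurableSet {y : ℝ | |(|y| - e)| ≤ d} :=
  measurableSet_le (by fun_prop) measurable_const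

lemma volume_abs_abs_sub_le {e d : ℝ} (hd : 0 ≤ d) :
    volume {y : ℝ | |(|y| - e)| ≤ d} ≤ ENNReal.ofReal (4 * d) := by
  have hsub : {y : ℝ | |(|y| - e)| ≤ d} ⊆ Icc (e - d) (e + d) ∪ Icc (-e - d) (-e + d) := by
    intro y (hy : |(|y| - e)| ≤ d)
    obtain ⟨hlo, hhi⟩ := abs_le.mp hy
    rcases abs_cases y with ⟨hy, _⟩ | ⟨hy, _⟩
    · exact Or.inl ⟨by linarith, by linarith⟩
    · exact Or.inr ⟨by linarith, by linarith⟩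
  refine (measure_mono hsub).trans ((measure_union_le _ _).trans ?_)
  rw [Real.volume_Icc, Real.volume_Icc, ← ENNReal.ofReal_add (by linarith) (by linarith)]
  apply ENNReal.ofReal_le_ofReal
  linarith

-- If `|z| ≤ e/4`, the Gaussian part has to bridge a distance of at least `e/2`.
lemma gaussianReal_abs_abs_add_sub_le {v : ℝ≥0} (hv : v ≠ 0) {e d : ℝ} (he : 0 < e) (hd : 0 ≤ d)
    (hde : d ≤ e / 4) (z : ℝ) :
    gaussianReal 0 v {w | |(|w + z| - e)| ≤ d} ≤
      ENNReal.ofReal ((√v)⁻¹ * Real.exp (-(e ^ 2 / (8 * v))) * (4 * d)) +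
        {z : ℝ | e / 4 < |z|}.indicator (fun _ => ENNReal.ofReal ((√v)⁻¹ * (4 * d))) z := by
  have hvol : volume {w | |(|w + z| - e)| ≤ d} ≤ ENNReal.ofReal (4 * d) := by
    rw [← preimage_ofPred_eq (p := fun y => |(|y| - e)| ≤ d) (f := fun w => w + z),
      measure_preimage_add_right]
    exact volume_abs_abs_sub_le hd
  by_cases hz : e / 4 < |z|
  · rw [indicator_of_mem (by exact hz)]
    refine le_add_left ((gaussianReal_le_of_forall_le_abs hv le_rfl hvol
      fun w _ => abs_nonneg w).trans_eq ?_)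
    simp
  · rw [indicator_of_notMem (by exact hz), add_zero]
    refine (gaussianReal_le_of_forall_le_abs hv (m := e / 2) (by linarith) hvol
      fun w (hw : |(|w + z| - e)| ≤ d) => ?_).trans_eq ?_
    · have := (abs_le.mp hw).1
      have := abs_add_le w z
      linarith
    · ring_nf

lemma gaussianReal_conv_abs_abs_sub_le {v : ℝ≥0} (hv : v ≠ 0) (μ : Measure ℝ)
    [IsProbabilityMeasure μ] {e d : ℝ} (he : 0 < e) (hd : 0 ≤ d) (hde : d ≤ e / 4) :
    (gaussianReal 0 v ∗ μ).real {y | |(|y| - e)| ≤ d} ≤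
      4 * d * ((√v)⁻¹ * (Real.exp (-(e ^ 2 / (8 * v))) + μ.real {z | e / 4 < |z|})) := by
  have hle : (gaussianReal 0 v ∗ μ) {y | |(|y| - e)| ≤ d} ≤ ENNReal.ofReal
      ((√v)⁻¹ * Real.exp (-(e ^ 2 / (8 * v))) * (4 * d) +
        (√v)⁻¹ * (4 * d) * μ.real {z | e / 4 < |z|}) := by
    rw [Measure.conv, Measure.map_apply (by fun_prop) (measurableSet_abs_abs_sub_le e d),
      Measure.prod_apply_symm (measurable_add (measurableSet_abs_abs_sub_le e d))]
    refine (lintegral_mono fun z => gaussianReal_abs_abs_add_sub_le hv he hd hde z).trans_eq ?_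
    rw [lintegral_add_left measurable_const, lintegral_indicator_const (measurableSet_lt_abs _),
      lintegral_const, measure_univ, mul_one, ENNReal.ofReal_add (by positivity) (by positivity),
      ENNReal.ofReal_mul (p := (√v)⁻¹ * (4 * d)) (by positivity), ofReal_measureReal]
  refine (ENNReal.toReal_le_of_le_ofReal (by positivity) hle).trans_eq ?_
  ring

lemma integral_conv_le_of_abs_le_add {μ ν : Measure ℝ} [IsProbabilityMeasure μ]
    [IsProbabilityMeasure ν] {f p q : ℝ → ℝ} (hf : Measurable f) (hp : Integrable p μ)
    (hq : Integrable q ν) (hle : ∀ w z, |f (w + z)| ≤ p w + q z) :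
    Integrable f (μ ∗ ν) ∧ ∫ y, |f y| ∂(μ ∗ ν) ≤ ∫ w, p w ∂μ + ∫ z, q z ∂ν := by
  have hsum : Integrable (fun x : ℝ × ℝ => p x.1 + q x.2) (μ.prod ν) :=
    (hp.comp_fst ν).add (hq.comp_snd μ)
  have hint : Integrable (fun x : ℝ × ℝ => f (x.1 + x.2)) (μ.prod ν) :=
    hsum.mono' (hf.comp measurable_add).aestronglyMeasurable (ae_of_all _ fun x => hle x.1 x.2)
  refine ⟨(integrable_map_measure hf.aestronglyMeasurable (by fun_prop)).mpr hint, ?_⟩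
  rw [Measure.conv, integral_map (by fun_prop) (by fun_prop)]
  refine (integral_mono hint.abs hsum fun x => hle x.1 x.2).trans_eq ?_
  rw [integral_add (hp.comp_fst ν) (hq.comp_snd μ), integral_fun_fst, integral_fun_snd]
  simp

lemma abs_indicator_lt_abs_add_le {w z e : ℝ} (he : 0 < e) :
    |{y : ℝ | e < |y|}.indicator (fun y => y) (w + z)| ≤
      2 * (2 / e) ^ 6 * |w| ^ 7 + 2 * {z : ℝ | e / 4 < |z|}.indicator (fun z => |z|) z := by
  have hz0 : 0 ≤ {z : ℝ | e / 4 < |z|}.indicator (fun z => |z|) z :=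
    indicator_nonneg (fun _ _ => abs_nonneg _) z
  by_cases hwz : e < |w + z|
  · rw [indicator_of_mem (by exact hwz)]
    have htri := abs_add_le w z
    rcases le_total |z| |w| with hzw | hwz'
    · have hone : 1 ≤ (2 / e) ^ 6 * |w| ^ 6 := by
        rw [← mul_pow]
        apply one_le_pow₀
        rw [div_mul_eq_mul_div, le_div_iff₀ he]
        linarith
      have := mul_le_mul_of_nonneg_right hone (abs_nonneg w)
      linarith
    · have hz : e / 4 < |z| := by linarith
      rw [indicator_of_mem (by exact hz)]
      have : 0 ≤ 2 * (2 / e) ^ 6 * |w| ^ 7 := by positivity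
      linarith
  · rw [indicator_of_notMem (by exact hwz), abs_zero]
    positivity

lemma abs_integral_indicator_abs_le_le {μ : Measure ℝ} (hint : Integrable (fun y => y) μ) (e : ℝ) :
    |∫ y, {y : ℝ | |y| ≤ e}.indicator (fun y => y) y ∂μ| ≤
      |∫ y, y ∂μ| + ∫ y, |{y : ℝ | e < |y|}.indicator (fun y => y) y| ∂μ := by
  have hcompl : {y : ℝ | |y| ≤ e} = {y : ℝ | e < |y|}ᶜ := by
    ext y
    simp
  have hsplit : ∫ y, {y : ℝ | |y| ≤ e}.indicator (fun y => y) y ∂μ =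
      ∫ y, y ∂μ - ∫ y, {y : ℝ | e < |y|}.indicator (fun y => y) y ∂μ := by
    rw [← integral_sub hint (hint.indicator (measurableSet_lt_abs e)), hcompl,
      indicator_compl]
    simp
  rw [hsplit]
  exact (abs_sub _ _).trans (by gcongr; exact abs_integral_le_integral_abs)

lemma HasStableLikeExponent.gaussianReal_conv {Y A B a : ℝ} {μ : Measure ℝ} [IsProbabilityMeasure μ]
    (hμ : HasStableLikeExponent Y A B a μ) (v : ℝ≥0) :
    HasStableLikeExponent Y A (B + v / 2) a (gaussianReal 0 v ∗ μ) := by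
  obtain ⟨ρ, hcf, hρ⟩ := hμ
  refine ⟨fun u => ρ u - v * u ^ 2 / 2, fun u => ?_, fun u => ?_⟩
  · rw [charFun_conv, charFun_gaussianReal, hcf, ← Complex.exp_add]
    congr 1
    push_cast
    ring
  · have hv : ‖((v : ℂ) * u ^ 2 / 2)‖ = v / 2 * u ^ 2 := by
      rw [show (v : ℂ) * u ^ 2 / 2 = ((v / 2 * u ^ 2 : ℝ) : ℂ) by push_cast; ring,
        Complex.norm_real, Real.norm_of_nonneg (by positivity)]
    have := norm_sub_le (ρ u) (v * u ^ 2 / 2)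
    linarith [hρ u]

/-- What is needed of a law `μ` to control how `∫ x²1_{|x| ≤ e} dμ` reacts to a translation: a
first absolute moment of order `e`, density at most `β` around the two points `±e` where the
truncated square jumps, and a truncated mean of size at most `m`. -/
structure IsRegularAtThreshold (C β m e : ℝ) (μ : Measure ℝ) : Prop where
  integrable_abs : Integrable (fun y => |y|) μ
  integral_abs_le : ∫ y, |y| ∂μ ≤ C * e
  measureReal_le : ∀ d, 0 ≤ d → d ≤ e / 4 → μ.real {y | |(|y| - e)| ≤ d} ≤ d * β
  abs_truncatedMean_le : |∫ y, {y : ℝ | |y| ≤ e}.indicator (fun y => y) y ∂μ| ≤ m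

section GaussianRegularisation

variable {Y T σ h e : ℝ} {v : ℝ≥0} {μ : Measure ℝ} [IsProbabilityMeasure μ]

lemma integral_abs_gaussianReal_conv_le (hμ : HasStableTail Y T h e μ) (hY1 : 1 < Y) (hY2 : Y < 2)
    (hT : 0 ≤ T) (hσ : 0 ≤ σ) (hh : 0 ≤ h) (he : 0 < e) (he1 : e ≤ 1) (hhe : h ≤ e ^ 2)
    (hv : v ≤ σ ^ 2 * h) :
    Integrable (fun y => |y|) (gaussianReal 0 v ∗ μ) ∧ ∫ y, |y| ∂(gaussianReal 0 v ∗ μ) ≤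
      (σ * ∫ w, |w| ^ 1 ∂gaussianReal 0 1) * e + (1 + 16 * (Y / (Y - 1)) * T) * e := by
  obtain ⟨hgauss, hgauss_eq⟩ := integral_abs_pow_gaussianReal 1 v
  obtain ⟨hμint, hμle⟩ := hμ.integral_abs_le hY1 hY2 hT hh he he1 hhe
  obtain ⟨hint, hle⟩ := integral_conv_le_of_abs_le_add (f := fun y => |y|) (by fun_prop) hgauss
    hμint fun w z => by simpa using abs_add_le w z
  simp only [abs_abs] at hle
  have hsqrt : √v ≤ σ * e :=
    calc √v ≤ √((σ * e) ^ 2) := Real.sqrt_le_sqrt (hv.trans (by rw [mul_pow]; gcongr))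
      _ = σ * e := Real.sqrt_sq (by positivity)
  refine ⟨hint, hle.trans (add_le_add ?_ hμle)⟩
  rw [hgauss_eq, pow_one]
  have hmoment : 0 ≤ ∫ w, |w| ^ 1 ∂gaussianReal 0 1 := integral_nonneg fun w => by positivity
  exact (mul_le_mul_of_nonneg_right hsqrt hmoment).trans_eq (by ring)

lemma gaussianReal_conv_abs_abs_sub_le_mul (hμ : HasStableTail Y T h e μ) (hY2 : Y ≤ 2)
    (hT : 0 ≤ T) (hσ : 0 < σ) (hh : 0 < h) (he : 0 < e) (hv : v ≤ σ ^ 2 * h)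
    (hv' : σ ^ 2 * h / 2 ≤ v) {d : ℝ} (hd : 0 ≤ d) (hde : d ≤ e / 4) :
    (gaussianReal 0 v ∗ μ).real {y | |(|y| - e)| ≤ d} ≤
      d * (8 / σ * (3072 * σ ^ 6 + 16 * T) * ((√h)⁻¹ * (h / e ^ 2) ^ 3 + √h * e ^ (-Y))) := by
  have hv0 : (0 : ℝ) < v := lt_of_lt_of_le (by positivity) hv'
  have : 0 < √h := Real.sqrt_pos.mpr hh
  have hsqrt : (√v)⁻¹ ≤ 2 / σ * (√h)⁻¹ := by
    rw [show 2 / σ * (√h)⁻¹ = (σ / 2 * √h)⁻¹ by field_simp]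
    gcongr
    apply Real.le_sqrt_of_sq_le
    rw [mul_pow, Real.sq_sqrt hh.le]
    linarith [mul_pos (pow_pos hσ 2) hh]
  have hexp : Real.exp (-(e ^ 2 / (8 * v))) ≤ 3072 * σ ^ 6 * (h / e ^ 2) ^ 3 := by
    calc Real.exp (-(e ^ 2 / (8 * v))) ≤ 6 / (e ^ 2 / (8 * v)) ^ 3 :=
          exp_neg_le_div_pow_three (by positivity)
      _ ≤ 6 / (e ^ 2 / (8 * (σ ^ 2 * h))) ^ 3 := by gcongr
      _ = _ := by field_simp; norm_num
  calc _ ≤ 4 * d * ((√v)⁻¹ * (Real.exp (-(e ^ 2 / (8 * v))) + μ.real {z | e / 4 < |z|})) :=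
        gaussianReal_conv_abs_abs_sub_le (by exact_mod_cast hv0.ne') μ he hd hde
    _ ≤ 4 * d * (2 / σ * (√h)⁻¹ *
          (3072 * σ ^ 6 * (h / e ^ 2) ^ 3 + 16 * T * (√h * √h * e ^ (-Y)))) := by
        rw [Real.mul_self_sqrt hh.le]
        gcongr
        exact hμ.measureReal_le hY2 hT hh.le he
    _ = d * (8 / σ * (3072 * σ ^ 6 * ((√h)⁻¹ * (h / e ^ 2) ^ 3) + 16 * T * (√h * e ^ (-Y)))) := by
        field_simp
        ring
    _ ≤ _ := by
        rw [mul_assoc (8 / σ), add_mul (3072 * σ ^ 6)]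
        gcongr
        · exact le_add_of_nonneg_right (by positivity)
        · exact le_add_of_nonneg_left (by positivity)

lemma integral_abs_indicator_lt_gaussianReal_conv_le (hμ : HasStableTail Y T h e μ) (hY1 : 1 < Y)
    (hY2 : Y < 2) (hT : 0 ≤ T) (hσ : 0 ≤ σ) (hh : 0 ≤ h) (he : 0 < e) (hhe : h ≤ e ^ 2)
    (hv : v ≤ σ ^ 2 * h) :
    ∫ y, |{y : ℝ | e < |y|}.indicator (fun y => y) y| ∂(gaussianReal 0 v ∗ μ) ≤
      (128 * σ ^ 7 * ∫ w, |w| ^ 7 ∂gaussianReal 0 1) * (e * (h / e ^ 2) ^ 3) +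
        2 * (16 * (Y / (Y - 1)) * T) * (h * e ^ (1 - Y)) := by
  obtain ⟨hgauss, hgauss_eq⟩ := integral_abs_pow_gaussianReal 7 v
  obtain ⟨hμint, hμle⟩ := hμ.setIntegral_abs_le hY1 hY2 hT hh he
  rw [← integrable_indicator_iff (measurableSet_lt_abs _)] at hμint
  rw [← integral_indicator (measurableSet_lt_abs _)] at hμle
  refine (integral_conv_le_of_abs_le_add (measurable_id.indicator (measurableSet_lt_abs e))
    (hgauss.const_mul (2 * (2 / e) ^ 6)) (hμint.const_mul 2)
    fun w z => abs_indicator_lt_abs_add_le he).2.trans ?_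
  have : 0 ≤ ∫ w, |w| ^ 7 ∂gaussianReal 0 1 := integral_nonneg fun w => by positivity
  have hsqrt : √v ≤ σ * √h :=
    (Real.sqrt_le_sqrt hv).trans_eq (by rw [Real.sqrt_mul (by positivity), Real.sqrt_sq hσ])
  have hpow : √v ^ 7 ≤ σ ^ 7 * (h ^ 3 * e) := by
    calc √v ^ 7 ≤ (σ * √h) ^ 7 := by gcongr
      _ = σ ^ 7 * ((√h ^ 2) ^ 3 * √h) := by ring
      _ ≤ σ ^ 7 * (h ^ 3 * e) := by
        rw [Real.sq_sqrt hh]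
        gcongr
        exact Real.sqrt_le_iff.mpr ⟨he.le, hhe⟩
  rw [integral_const_mul, integral_const_mul, hgauss_eq, mul_assoc 2 (16 * _ * _)]
  refine add_le_add ?_ (by gcongr)
  calc 2 * (2 / e) ^ 6 * (√v ^ 7 * ∫ w, |w| ^ 7 ∂gaussianReal 0 1)
      ≤ 2 * (2 / e) ^ 6 * (σ ^ 7 * (h ^ 3 * e) * ∫ w, |w| ^ 7 ∂gaussianReal 0 1) := by gcongr
    _ = _ := by field_simp; ring

end GaussianRegularisation

/-- The order of the density at `±e` of a Gaussian law of variance `h` convolved with a law of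
stable-like exponent of order `h`. -/
def thresholdDensityRate (Y h e : ℝ) : ℝ :=
  (√h)⁻¹ * (h / e ^ 2) ^ 3 + √h * e ^ (-Y)

/-- The order of the part beyond `e` of the first absolute moment of such a law. -/
def truncatedMeanRate (Y h e : ℝ) : ℝ :=
  e * (h / e ^ 2) ^ 3 + h * e ^ (1 - Y)

theorem HasStableLikeExponent.exists_isRegularAtThreshold {Y K σ : ℝ} (hY1 : 1 < Y) (hY2 : Y < 2)
    (hK : 0 ≤ K) (hσ : 0 < σ) :
    ∃ C, 0 ≤ C ∧ ∀ (h e a : ℝ) (v : ℝ≥0) (μ : Measure ℝ), IsProbabilityMeasure μ →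
      0 < h → 0 < e → e ≤ 1 → h ≤ e ^ 2 → σ ^ 2 * h / 2 ≤ v → v ≤ σ ^ 2 * h → |a| ≤ e / 8 →
      HasStableLikeExponent Y (K * h) (K * h ^ (2 - Y / 2)) a μ →
      IsRegularAtThreshold C (C * thresholdDensityRate Y h e)
        (|a| + C * truncatedMeanRate Y h e) e (gaussianReal 0 v ∗ μ) := by
  set T := 1088 * K
  have hT : 0 ≤ T := by positivity
  have hm₁ : 0 ≤ ∫ w, |w| ^ 1 ∂gaussianReal 0 1 := integral_nonneg fun w => by positivity
  have hm₇ : 0 ≤ ∫ w, |w| ^ 7 ∂gaussianReal 0 1 := integral_nonneg fun w => by positivity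
  set m₁ := ∫ w, |w| ^ 1 ∂gaussianReal 0 1
  set m₇ := ∫ w, |w| ^ 7 ∂gaussianReal 0 1
  have hA : 0 ≤ 16 * (Y / (Y - 1)) * T :=
    mul_nonneg (mul_nonneg (by norm_num) (div_nonneg (by linarith) (by linarith))) hT
  set A := 16 * (Y / (Y - 1)) * T
  set C := σ * m₁ + (1 + A) + 8 / σ * (3072 * σ ^ 6 + 16 * T) + 128 * σ ^ 7 * m₇ + 2 * A
  have : 0 ≤ σ * m₁ := by positivity
  have : 0 ≤ 8 / σ * (3072 * σ ^ 6 + 16 * T) := by positivity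
  have : 0 ≤ 128 * σ ^ 7 * m₇ := by positivity
  refine ⟨C, by positivity, fun h e a v μ _ hh he he1 hhe hv' hv ha hμ => ?_⟩
  have htail := hμ.hasStableTail (by linarith) hY2 hK hh he hhe ha
  obtain ⟨hint, hle⟩ := integral_abs_gaussianReal_conv_le htail hY1 hY2 hT hσ.le hh.le he he1 hhe hv
  have hid : Integrable (fun y => y) (gaussianReal 0 v ∗ μ) :=
    (integrable_norm_iff (by fun_prop)).mp hint
  refine ⟨hint, hle.trans ?_, fun d hd hde =>
    (gaussianReal_conv_abs_abs_sub_le_mul htail hY2.le hT hσ hh he hv hv' hd hde).trans ?_,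
    (abs_integral_indicator_abs_le_le hid e).trans ?_⟩
  · rw [← add_mul]
    gcongr
    linarith
  · rw [thresholdDensityRate]
    gcongr
    linarith
  · rw [(hμ.gaussianReal_conv v).integral_id_eq hY1 hid, truncatedMeanRate, mul_add C]
    refine add_le_add_right ((integral_abs_indicator_lt_gaussianReal_conv_le htail hY1 hY2 hT hσ.le
      hh.le he hhe hv).trans ?_) _
    gcongr <;> linarith

/-! ### Fourier representation of Gaussian-smoothed integrals -/

section FourierWeight

variable {v : ℝ≥0} {f : ℝ → ℝ}

lemma norm_exp_I_mul_mul (u x : ℝ) : ‖Complex.exp (Complex.I * u * x)‖ = 1 := by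
  simp [Complex.norm_exp]

lemma norm_exp_neg_I_mul_mul (u x : ℝ) : ‖Complex.exp (-(Complex.I * u * x))‖ = 1 := by
  simp [Complex.norm_exp]

lemma gaussianPDFReal_zero_eq_integral (hv : v ≠ 0) (w : ℝ) :
    (gaussianPDFReal 0 v w : ℂ) = (2 * π : ℂ)⁻¹ *
      ∫ u : ℝ, Complex.exp (-(Complex.I * u * w)) * (Real.exp (-(v / 2) * u ^ 2) : ℝ) := by
  have hfourier := fourierIntegral_gaussian (b := ((v / 2 : ℝ) : ℂ))
    (by rw [Complex.ofReal_re]; positivity) (-(w : ℂ))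
  have hintegrand : ∀ u : ℝ,
      Complex.exp (-(Complex.I * u * w)) * (Real.exp (-(v / 2) * u ^ 2) : ℝ) =
        Complex.exp (Complex.I * (-(w : ℂ)) * u) *
          Complex.exp (-((v / 2 : ℝ) : ℂ) * (u : ℂ) ^ 2) := fun u => by
    push_cast
    congr 2
    ring
  have hsqrt : ((π : ℂ) / ((v / 2 : ℝ) : ℂ)) ^ ((1 : ℂ) / 2) = (√(π / (v / 2)) : ℝ) := by
    rw [Real.sqrt_eq_rpow, Complex.ofReal_cpow (by positivity)]
    push_cast
    rfl
  have hexp : Complex.exp (-(-(w : ℂ)) ^ 2 / (4 * ((v / 2 : ℝ) : ℂ))) =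
      (Real.exp (-(w - 0) ^ 2 / (2 * v)) : ℝ) := by
    push_cast
    congr 1
    field_simp
    ring
  have hconst : (√(2 * π * v))⁻¹ = (2 * π)⁻¹ * √(π / (v / 2)) := by
    rw [show π / (v / 2) = (2 * π) ^ 2 / (2 * π * v) by field_simp,
      Real.sqrt_div (by positivity), Real.sqrt_sq (by positivity)]
    field_simp
  simp_rw [hintegrand]
  rw [hfourier, hsqrt, hexp, gaussianPDFReal, hconst]
  push_cast
  ring

/-- The density in `u` against which the integral of `f` under a law `γ_v ∗ μ`, with `γ_v` centred
Gaussian of variance `v`, is the integral of the characteristic function of `μ`. -/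
def fourierWeight (v : ℝ≥0) (f : ℝ → ℝ) (u : ℝ) : ℂ :=
  (2 * π : ℂ)⁻¹ * (∫ y : ℝ, (f y : ℂ) * Complex.exp (-(Complex.I * u * y))) *
    (Real.exp (-(v / 2) * u ^ 2) : ℝ)

lemma norm_fourierWeight_le (v : ℝ≥0) (f : ℝ → ℝ) (u : ℝ) :
    ‖fourierWeight v f u‖ ≤ (2 * π)⁻¹ * (∫ y, |f y|) * Real.exp (-(v / 2) * u ^ 2) := by
  have hfourier : ‖∫ y : ℝ, (f y : ℂ) * Complex.exp (-(Complex.I * u * y))‖ ≤ ∫ y, |f y| :=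
    (norm_integral_le_integral_norm _).trans_eq
      (integral_congr_ae (ae_of_all _ fun y => by simp [norm_exp_neg_I_mul_mul]))
  have hconst : ‖(2 * π : ℂ)⁻¹‖ = (2 * π)⁻¹ := by simp [abs_of_pos Real.pi_pos]
  rw [fourierWeight, norm_mul, norm_mul, hconst, Complex.norm_real,
    Real.norm_of_nonneg (Real.exp_pos _).le]
  gcongr

@[fun_prop]
lemma measurable_fourierWeight (hf : Measurable f) : Measurable (fourierWeight v f) := by
  refine Measurable.mul (Measurable.const_mul ?_ _) (by fun_prop)
  refine (StronglyMeasurable.integral_prod_right (Measurable.stronglyMeasurable ?_)).measurable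
  fun_prop

lemma integrable_fourierWeight (hv : v ≠ 0) (hf : Measurable f) :
    Integrable (fourierWeight v f) :=
  ((integrable_exp_neg_mul_sq (show (0 : ℝ) < v / 2 by positivity)).const_mul _).mono'
    (Measurable.aestronglyMeasurable (by fun_prop)) (ae_of_all _ (norm_fourierWeight_le v f))

lemma integrable_abs_mul_norm_fourierWeight (hv : v ≠ 0) (hf : Measurable f) :
    Integrable fun u => |u| * ‖fourierWeight v f u‖ := by
  refine (((integrable_mul_exp_neg_mul_sq (show (0 : ℝ) < v / 2 by positivity)).norm).const_mul
    ((2 * π)⁻¹ * ∫ y, |f y|)).mono' (Measurable.aestronglyMeasurable (by fun_prop))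
    (ae_of_all _ fun u => ?_)
  rw [norm_mul, norm_norm, Real.norm_eq_abs, abs_abs, norm_mul, Real.norm_eq_abs, Real.norm_eq_abs,
    Real.abs_exp, mul_left_comm]
  gcongr
  exact norm_fourierWeight_le v f u

lemma integral_gaussianReal_comp_add (hv : v ≠ 0) (hf : Measurable f) (hfi : Integrable f)
    (s : ℝ) : ((∫ w, f (w + s) ∂gaussianReal 0 v : ℝ) : ℂ) =
      ∫ u : ℝ, fourierWeight v f u * Complex.exp (Complex.I * u * s) := by
  have htranslate : ∫ w, gaussianPDFReal 0 v w • f (w + s) =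
      ∫ y, gaussianPDFReal 0 v (y - s) * f y := by
    rw [← integral_add_right_eq_self (fun y => gaussianPDFReal 0 v (y - s) * f y) s]
    simp
  have hinner : ∀ y : ℝ, ((gaussianPDFReal 0 v (y - s) * f y : ℝ) : ℂ) = ∫ u : ℝ,
      (2 * π : ℂ)⁻¹ * ((f y : ℂ) * Complex.exp (-(Complex.I * u * y))) *
        ((Real.exp (-(v / 2) * u ^ 2) : ℝ) * Complex.exp (Complex.I * u * s)) := fun y => by
    rw [Complex.ofReal_mul, gaussianPDFReal_zero_eq_integral hv, mul_assoc, mul_comm _ (f y : ℂ),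
      ← mul_assoc, ← integral_const_mul]
    congr 1 with u
    have hexp : Complex.exp (-(Complex.I * u * ((y - s : ℝ) : ℂ))) =
        Complex.exp (-(Complex.I * u * y)) * Complex.exp (Complex.I * u * s) := by
      rw [← Complex.exp_add]
      push_cast
      ring_nf
    rw [hexp]
    ring
  have hdom : Integrable (fun p : ℝ × ℝ => |f p.1| * Real.exp (-(v / 2) * p.2 ^ 2)) :=
    hfi.abs.mul_prod (integrable_exp_neg_mul_sq (by positivity))
  rw [integral_gaussianReal_eq_integral_smul hv, htranslate, ← integral_complex_ofReal]
  simp_rw [hinner]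
  rw [integral_integral_swap]
  · congr 1 with u
    rw [integral_mul_const, integral_const_mul, fourierWeight]
    ring
  · refine (hdom.const_mul (2 * π)⁻¹).mono' (Measurable.aestronglyMeasurable
      (by simp only [Function.uncurry_def]; fun_prop)) (ae_of_all _ fun p => le_of_eq ?_)
    simp [Function.uncurry_def, Complex.norm_exp, abs_of_pos Real.pi_pos,
      -Complex.ofReal_exp]
    ring

lemma integral_gaussianReal_conv_comp_add (hv : v ≠ 0) (hf : Measurable f) (hfi : Integrable f)
    {B : ℝ} (hB : ∀ y, |f y| ≤ B) (μ : Measure ℝ) [IsFiniteMeasure μ] (x : ℝ) :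
    ((∫ y, f (y + x) ∂(gaussianReal 0 v ∗ μ) : ℝ) : ℂ) =
      ∫ u : ℝ, fourierWeight v f u * Complex.exp (Complex.I * u * x) * charFun μ u := by
  have hint : Integrable (fun p : ℝ × ℝ => f (p.1 + p.2 + x)) ((gaussianReal 0 v).prod μ) :=
    (integrable_const B).mono' (Measurable.aestronglyMeasurable (by fun_prop))
      (ae_of_all _ fun p => hB _)
  have hdom : Integrable (fun p : ℝ × ℝ => (1 : ℝ) * ‖fourierWeight v f p.2‖) (μ.prod volume) :=
    (integrable_const (1 : ℝ)).mul_prod (integrable_fourierWeight hv hf).norm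
  rw [Measure.conv, integral_map (by fun_prop) (Measurable.aestronglyMeasurable (by fun_prop)),
    integral_prod_symm _ hint, ← integral_complex_ofReal]
  simp_rw [add_assoc, integral_gaussianReal_comp_add hv hf hfi]
  rw [integral_integral_swap]
  · congr 1 with u
    rw [charFun_apply_real, ← integral_const_mul]
    congr 1 with z
    have hexp : Complex.exp (Complex.I * u * ((z + x : ℝ) : ℂ)) =
        Complex.exp (Complex.I * u * x) * Complex.exp (u * z * Complex.I) := by
      rw [← Complex.exp_add]
      push_cast
      ring_nf
    rw [hexp, mul_assoc, mul_assoc, mul_assoc]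
  · refine hdom.mono' (Measurable.aestronglyMeasurable
      (by simp only [Function.uncurry_def]; fun_prop)) (ae_of_all _ fun p => le_of_eq ?_)
    rw [Function.uncurry_apply_pair, norm_mul, norm_exp_I_mul_mul, mul_one, one_mul]

end FourierWeight

lemma integral_mul_jumpExponent {W : ℝ → ℂ} {κ : ℝ → ℝ} (hW : Measurable W)
    (hWint : Integrable fun u => |u| * ‖W u‖) (hκ : Measurable κ)
    (hκint : Integrable fun x => |x| * |κ x|) :
    ∫ u, W u * jumpExponent κ u =
      ∫ x : ℝ, (∫ u : ℝ, W u * (Complex.exp (Complex.I * u * x) - 1)) * (κ x : ℂ) := by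
  simp_rw [jumpExponent, ← integral_const_mul, ← integral_mul_const, ← mul_assoc (W _)]
  refine integral_integral_swap ((hWint.mul_prod hκint).mono' (Measurable.aestronglyMeasurable
    (by simp only [Function.uncurry_def]; fun_prop)) (ae_of_all _ fun p => ?_))
  rw [Function.uncurry_apply_pair, mul_assoc, norm_mul]
  calc _ ≤ ‖W p.1‖ * (|p.1| * (|p.2| * |κ p.2|)) := by
        gcongr
        exact norm_exp_I_mul_mul_sub_one_mul_le p.1 p.2 (κ p.2)
    _ = _ := by ring

lemma norm_integral_fourierWeight_mul_charFun_mul_jumpExponent_le {v : ℝ≥0} {f κ g : ℝ → ℝ}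
    {B : ℝ} (hv : v ≠ 0) (hf : Measurable f) (hfi : Integrable f) (hB : ∀ y, |f y| ≤ B)
    (hκ : Measurable κ) (hκint : Integrable fun x => |x| * |κ x|)
    (μ : Measure ℝ) [IsProbabilityMeasure μ]
    (hg : ∀ x, |∫ y, f (y + x) ∂(gaussianReal 0 v ∗ μ) - ∫ y, f y ∂(gaussianReal 0 v ∗ μ)| ≤ g x)
    (hκg : Integrable fun x => |κ x| * g x) :
    ‖∫ u, fourierWeight v f u * charFun μ u * jumpExponent κ u‖ ≤ ∫ x, |κ x| * g x := by
  have := measurable_charFun (μ := μ)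
  have hint : ∀ x : ℝ, Integrable fun u : ℝ =>
      fourierWeight v f u * Complex.exp (Complex.I * u * x) * charFun μ u := fun x =>
    (integrable_fourierWeight hv hf).mono (Measurable.aestronglyMeasurable (by fun_prop))
      (ae_of_all _ fun u => by
        rw [norm_mul, norm_mul, norm_exp_I_mul_mul, mul_one]
        exact mul_le_of_le_one_right (norm_nonneg _) (norm_charFun_le_one _))
  have hfourier := integral_gaussianReal_conv_comp_add hv hf hfi hB μ
  have hincrement : ∀ x : ℝ,
      ∫ u : ℝ, fourierWeight v f u * charFun μ u * (Complex.exp (Complex.I * u * x) - 1) =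
        (∫ y, f (y + x) ∂(gaussianReal 0 v ∗ μ) - ∫ y, f y ∂(gaussianReal 0 v ∗ μ) : ℝ) :=
      fun x => by
    have hzero := hfourier 0
    simp only [add_zero] at hzero
    rw [Complex.ofReal_sub, hfourier x, hzero, ← integral_sub (hint x) (by simpa using hint 0)]
    congr 1 with u
    simp only [Complex.ofReal_zero, mul_zero, Complex.exp_zero]
    ring
  rw [integral_mul_jumpExponent (by fun_prop) ?_ hκ hκint]
  · simp_rw [hincrement]
    refine norm_integral_le_of_norm_le hκg (ae_of_all _ fun x => ?_)
    rw [norm_mul, Complex.norm_real, Complex.norm_real, Real.norm_eq_abs, Real.norm_eq_abs,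
      mul_comm]
    gcongr
    exact hg x
  · refine (integrable_abs_mul_norm_fourierWeight hv hf).mono
      (Measurable.aestronglyMeasurable (by fun_prop)) (ae_of_all _ fun u => ?_)
    rw [norm_mul, norm_mul _ ‖_‖, norm_norm, norm_norm, norm_mul]
    gcongr
    exact mul_le_of_le_one_right (norm_nonneg _) (norm_charFun_le_one _)

lemma exp_add_sub_exp_eq_intervalIntegral (a c : ℂ) :
    Complex.exp (a + c) - Complex.exp a = ∫ t in (0 : ℝ)..1, c * Complex.exp (a + t * c) := by
  have hderiv : ∀ t ∈ uIcc (0 : ℝ) 1,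
      HasDerivAt (fun t : ℝ => Complex.exp (a + t * c)) (c * Complex.exp (a + t * c)) t :=
    fun t _ => by
      simpa [mul_comm] using ((Complex.ofRealCLM.hasDerivAt.mul_const c).const_add a).cexp
  rw [intervalIntegral.integral_eq_sub_of_hasDerivAt hderiv
    (Continuous.intervalIntegrable (by fun_prop) _ _)]
  simp

lemma norm_integral_mul_exp_add_sub_le {W A c : ℝ → ℂ} {M : ℝ} (hW : Measurable W)
    (hA : Measurable A) (hc : Measurable c) (hWint : Integrable W)
    (hWc : Integrable fun u => W u * c u)
    (hexp : ∀ t ∈ Icc (0 : ℝ) 1, ∀ u, ‖Complex.exp (A u + t * c u)‖ ≤ 1)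
    (hM : ∀ t ∈ Icc (0 : ℝ) 1, ‖∫ u, W u * Complex.exp (A u + t * c u) * c u‖ ≤ M) :
    ‖(∫ u, W u * Complex.exp (A u + c u)) - ∫ u, W u * Complex.exp (A u)‖ ≤ M := by
  have hint : ∀ t ∈ Icc (0 : ℝ) 1, Integrable fun u => W u * Complex.exp (A u + t * c u) :=
    fun t ht => hWint.mono (Measurable.aestronglyMeasurable (by fun_prop)) (ae_of_all _ fun u => by
      rw [norm_mul]
      exact mul_le_of_le_one_right (norm_nonneg _) (hexp t ht u))
  have hswap : Integrable (Function.uncurry fun (u t : ℝ) =>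
      W u * Complex.exp (A u + t * c u) * c u) (volume.prod (volume.restrict (Ioc 0 1))) := by
    refine (hWc.norm.mul_prod (integrable_const (1 : ℝ))).mono' (Measurable.aestronglyMeasurable
      (by simp only [Function.uncurry_def]; fun_prop)) ?_
    filter_upwards [Measure.quasiMeasurePreserving_snd.ae
      (ae_restrict_mem (measurableSet_Ioc (a := (0 : ℝ)) (b := 1)))] with p hp
    rw [Function.uncurry_apply_pair, mul_right_comm, norm_mul]
    gcongr
    exact hexp _ (Ioc_subset_Icc_self hp) _
  have hdiff : (∫ u, W u * Complex.exp (A u + c u)) - ∫ u, W u * Complex.exp (A u) =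
      ∫ u, ∫ t in Ioc (0 : ℝ) 1, W u * Complex.exp (A u + t * c u) * c u := by
    rw [← integral_sub (by simpa using hint 1 (by simp)) (by simpa using hint 0 (by simp))]
    congr 1 with u
    rw [← mul_sub, exp_add_sub_exp_eq_intervalIntegral, intervalIntegral.integral_of_le zero_le_one,
      ← integral_const_mul]
    congr 1 with t
    ring
  rw [hdiff, integral_integral_swap hswap]
  simpa using norm_setIntegral_le_of_norm_le_const (μ := volume) (s := Ioc (0 : ℝ) 1) (by simp)
    fun t ht => hM t (Ioc_subset_Icc_self ht)

/-- Differentiating `∫ f d(γ_v ∗ μ t)` in `t` brings down the factor `jumpExponent κ`, and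
multiplication of a characteristic function by `e^{iux} − 1` is the increment of `f` under
translation by `x`. -/
theorem abs_integral_gaussianReal_conv_sub_le {v : ℝ≥0} {f κ g : ℝ → ℝ} {A : ℝ → ℂ} {B : ℝ}
    {μ : ℝ → Measure ℝ} (hv : v ≠ 0) (hf : Measurable f) (hfi : Integrable f)
    (hB : ∀ y, |f y| ≤ B) (hκ : Measurable κ) (hκint : Integrable fun x => |x| * |κ x|)
    (hA : Measurable A) (hμ : ∀ t ∈ Icc (0 : ℝ) 1, IsProbabilityMeasure (μ t))
    (hcharFun : ∀ t ∈ Icc (0 : ℝ) 1, ∀ u,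
      charFun (μ t) u = Complex.exp (A u + t * jumpExponent κ u))
    (hg : ∀ t ∈ Icc (0 : ℝ) 1, ∀ x,
      |∫ y, f (y + x) ∂(gaussianReal 0 v ∗ μ t) - ∫ y, f y ∂(gaussianReal 0 v ∗ μ t)| ≤ g x)
    (hκg : Integrable fun x => |κ x| * g x) :
    |∫ y, f y ∂(gaussianReal 0 v ∗ μ 1) - ∫ y, f y ∂(gaussianReal 0 v ∗ μ 0)| ≤
      ∫ x, |κ x| * g x := by
  have hfourier : ∀ t ∈ Icc (0 : ℝ) 1, ((∫ y, f y ∂(gaussianReal 0 v ∗ μ t) : ℝ) : ℂ) =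
      ∫ u, fourierWeight v f u * Complex.exp (A u + t * jumpExponent κ u) := fun t ht => by
    have := hμ t ht
    have hzero := integral_gaussianReal_conv_comp_add hv hf hfi hB (μ t) 0
    simpa [hcharFun t ht] using hzero
  have hone := hfourier 1 (by simp)
  have hzero := hfourier 0 (by simp)
  simp only [Complex.ofReal_one, one_mul] at hone
  simp only [Complex.ofReal_zero, zero_mul, add_zero] at hzero
  rw [← Real.norm_eq_abs, ← Complex.norm_real, Complex.ofReal_sub, hone, hzero]
  refine norm_integral_mul_exp_add_sub_le (by fun_prop) hA (by fun_prop)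
    (integrable_fourierWeight hv hf) ?_ (fun t ht u => ?_) fun t ht => ?_
  · refine ((integrable_abs_mul_norm_fourierWeight hv hf).mul_const (∫ x, |x| * |κ x|)).mono'
      (Measurable.aestronglyMeasurable (by fun_prop)) (ae_of_all _ fun u => ?_)
    rw [norm_mul]
    calc _ ≤ ‖fourierWeight v f u‖ * (|u| * ∫ x, |x| * |κ x|) := by
          gcongr
          exact norm_jumpExponent_le hκint u
      _ = _ := by ring
  · have := hμ t ht
    rw [← hcharFun t ht u]
    exact norm_charFun_le_one _
  · have := hμ t ht
    simp_rw [← hcharFun t ht]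
    exact norm_integral_fourierWeight_mul_charFun_mul_jumpExponent_le hv hf hfi hB hκ hκint _
      (hg t ht) hκg

/-! ### Translations of the truncated square -/

/-- The truncated square `x²·1_{|x| ≤ e}`, whose expectation is the truncated second moment. -/
def truncSq (e x : ℝ) : ℝ :=
  {x : ℝ | |x| ≤ e}.indicator (fun x => x ^ 2) x

section TruncSq

variable {e : ℝ}

lemma measurableSet_abs_le (e : ℝ) : MeasurableSet {x : ℝ | |x| ≤ e} :=
  measurableSet_le (by fun_prop) measurable_const

lemma truncSq_of_abs_le {x : ℝ} (hx : |x| ≤ e) : truncSq e x = x ^ 2 :=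
  indicator_of_mem (by exact hx) _

lemma truncSq_of_not_abs_le {x : ℝ} (hx : ¬ |x| ≤ e) : truncSq e x = 0 :=
  indicator_of_notMem (by exact hx) _

@[fun_prop]
lemma measurable_truncSq (e : ℝ) : Measurable (truncSq e) :=
  Measurable.indicator (by fun_prop) (measurableSet_abs_le e)

lemma truncSq_nonneg (e x : ℝ) : 0 ≤ truncSq e x :=
  indicator_nonneg (fun _ _ => sq_nonneg _) x

lemma truncSq_le (e x : ℝ) : truncSq e x ≤ e ^ 2 := by
  by_cases hx : |x| ≤ e
  · rw [truncSq_of_abs_le hx]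
    exact sq_le_sq' (abs_le.mp hx).1 (abs_le.mp hx).2
  · rw [truncSq_of_not_abs_le hx]
    positivity

lemma abs_truncSq_le (e x : ℝ) : |truncSq e x| ≤ e ^ 2 := by
  rw [abs_of_nonneg (truncSq_nonneg e x)]
  exact truncSq_le e x

lemma integrable_truncSq (e : ℝ) : Integrable (truncSq e) := by
  have hset : {x : ℝ | |x| ≤ e} = Icc (-e) e := by
    ext x
    simp [abs_le]
  refine IntegrableOn.integrable_indicator ?_ (measurableSet_abs_le e)
  rw [hset]
  exact (continuous_pow 2).integrableOn_Icc

lemma integrable_truncSq_add (e x : ℝ) (μ : Measure ℝ) [IsFiniteMeasure μ] :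
    Integrable (fun y => truncSq e (y + x)) μ :=
  (integrable_const (e ^ 2)).mono' (Measurable.aestronglyMeasurable (by fun_prop))
    (ae_of_all _ fun y => abs_truncSq_le e _)

lemma integral_truncSq_add_sub_integral (e x : ℝ) (μ : Measure ℝ) [IsFiniteMeasure μ] :
    ∫ y, truncSq e (y + x) ∂μ - ∫ y, truncSq e y ∂μ =
      ∫ y, (truncSq e (y + x) - truncSq e y) ∂μ :=
  (integral_sub (integrable_truncSq_add e x μ)
    (by simpa using integrable_truncSq_add e 0 μ)).symm

lemma abs_truncSq_add_sub_le_sq (e x y : ℝ) : |truncSq e (y + x) - truncSq e y| ≤ e ^ 2 := by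
  rw [abs_le]
  constructor <;>
    linarith [truncSq_nonneg e y, truncSq_nonneg e (y + x), truncSq_le e y, truncSq_le e (y + x)]

lemma indicator_abs_abs_sub_le_of_not_iff {x y : ℝ} (hxy : ¬ (|y| ≤ e ↔ |y + x| ≤ e)) :
    {y : ℝ | |(|y| - e)| ≤ |x|}.indicator (1 : ℝ → ℝ) y = 1 := by
  have hadd := abs_add_le y x
  have hsub := abs_sub_abs_le_abs_sub y (y + x)
  rw [sub_add_cancel_left, abs_neg] at hsub
  have hmem : |(|y| - e)| ≤ |x| := by
    rw [abs_le]
    rcases lt_or_ge e |y| with hy | hy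
    · have hyx : |y + x| ≤ e := by_contra fun hyx => hxy (iff_of_false hy.not_ge hyx)
      constructor <;> linarith [abs_nonneg x]
    · have hyx : e < |y + x| := not_le.mp fun hyx => hxy (iff_of_true hy hyx)
      constructor <;> linarith [abs_nonneg x]
  exact indicator_of_mem (by exact hmem) _

lemma abs_truncSq_add_sub_le (e x y : ℝ) :
    |truncSq e (y + x) - truncSq e y| ≤ 2 * |x| * |y| + x ^ 2 +
      e ^ 2 * {y : ℝ | |(|y| - e)| ≤ |x|}.indicator 1 y := by
  have hind : 0 ≤ {y : ℝ | |(|y| - e)| ≤ |x|}.indicator (1 : ℝ → ℝ) y :=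
    indicator_nonneg (fun _ _ => zero_le_one) y
  have hpoly : 0 ≤ 2 * |x| * |y| + x ^ 2 := by positivity
  by_cases hxy : |y| ≤ e ↔ |y + x| ≤ e
  · refine le_add_of_le_of_nonneg ?_ (by positivity)
    by_cases hy : |y| ≤ e
    · rw [truncSq_of_abs_le hy, truncSq_of_abs_le (hxy.mp hy),
        show (y + x) ^ 2 - y ^ 2 = 2 * x * y + x ^ 2 by ring]
      exact (abs_add_le _ _).trans_eq (by rw [abs_mul, abs_mul, abs_two, abs_sq])
    · rwa [truncSq_of_not_abs_le hy, truncSq_of_not_abs_le (mt hxy.mpr hy), sub_zero, abs_zero]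
  · rw [indicator_abs_abs_sub_le_of_not_iff hxy]
    linarith [abs_truncSq_add_sub_le_sq e x y]

lemma abs_truncSq_add_sub_sub_le {a : ℝ} (ha : |a| ≤ e / 4) (y : ℝ) :
    |truncSq e (y + a) - truncSq e y - 2 * a * {y : ℝ | |y| ≤ e}.indicator (fun y => y) y| ≤
      a ^ 2 + 3 * e ^ 2 * {y : ℝ | |(|y| - e)| ≤ |a|}.indicator 1 y := by
  have hind : 0 ≤ {y : ℝ | |(|y| - e)| ≤ |a|}.indicator (1 : ℝ → ℝ) y :=
    indicator_nonneg (fun _ _ => zero_le_one) y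
  have he : 0 ≤ e := by linarith [abs_nonneg a]
  by_cases hay : |y| ≤ e ↔ |y + a| ≤ e
  · refine le_add_of_le_of_nonneg ?_ (by positivity)
    by_cases hy : |y| ≤ e
    · rw [indicator_of_mem (by exact hy), truncSq_of_abs_le hy, truncSq_of_abs_le (hay.mp hy),
        show (y + a) ^ 2 - y ^ 2 - 2 * a * y = a ^ 2 by ring, abs_of_nonneg (sq_nonneg a)]
    · rw [indicator_of_notMem (by exact hy), truncSq_of_not_abs_le hy,
        truncSq_of_not_abs_le (mt hay.mpr hy)]
      simpa using sq_nonneg a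
  · have hdiff := abs_truncSq_add_sub_le_sq e a y
    have hmean : |{y : ℝ | |y| ≤ e}.indicator (fun y => y) y| ≤ e := by
      rw [indicator_apply]
      split_ifs with hy
      exacts [hy, by simpa using he]
    have hprod : |a| * |{y : ℝ | |y| ≤ e}.indicator (fun y => y) y| ≤ e / 4 * e := by gcongr
    rw [indicator_abs_abs_sub_le_of_not_iff hay]
    refine (abs_sub _ _).trans ?_
    rw [abs_mul, abs_mul, abs_two]
    nlinarith [sq_nonneg a]

end TruncSq

namespace IsRegularAtThreshold

variable {C β m e : ℝ} {μ : Measure ℝ}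

lemma density_nonneg (hμ : IsRegularAtThreshold C β m e μ) (he : 0 < e) : 0 ≤ β :=
  nonneg_of_mul_nonneg_right
    (measureReal_nonneg.trans (hμ.measureReal_le (e / 4) (by positivity) le_rfl)) (by positivity)

lemma integral_indicator_le (hμ : IsRegularAtThreshold C β m e μ) {d : ℝ} (hd : 0 ≤ d)
    (hde : d ≤ e / 4) : ∫ y, {y : ℝ | |(|y| - e)| ≤ d}.indicator 1 y ∂μ ≤ d * β := by
  rw [integral_indicator_one (measurableSet_abs_abs_sub_le e d)]
  exact hμ.measureReal_le d hd hde

variable [IsProbabilityMeasure μ]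

lemma integrable_indicator (e d : ℝ) :
    Integrable ({y : ℝ | |(|y| - e)| ≤ d}.indicator (1 : ℝ → ℝ)) μ :=
  (integrable_const 1).indicator (measurableSet_abs_abs_sub_le e d)

lemma abs_integral_truncSq_add_sub_le (hμ : IsRegularAtThreshold C β m e μ) (he : 0 < e) (x : ℝ) :
    |∫ y, truncSq e (y + x) ∂μ - ∫ y, truncSq e y ∂μ| ≤
      ((2 * C + 4) * e + e ^ 2 * β) * min |x| (e / 4) := by
  have hC : 0 ≤ C * e := (integral_nonneg fun y => abs_nonneg y).trans hμ.integral_abs_le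
  have hβ := hμ.density_nonneg he
  rw [integral_truncSq_add_sub_integral]
  rcases le_total |x| (e / 4) with hx | hx
  · rw [min_eq_left hx, ← Real.norm_eq_abs]
    have hlin : Integrable (fun y => 2 * |x| * |y| + x ^ 2) μ :=
      (hμ.integrable_abs.const_mul _).add (integrable_const _)
    have hind := (integrable_indicator (μ := μ) e |x|).const_mul (e ^ 2)
    have hsq : x ^ 2 ≤ |x| * (4 * e) := by
      rw [← sq_abs, sq]
      gcongr
      linarith
    calc _ ≤ ∫ y, (2 * |x| * |y| + x ^ 2 +
            e ^ 2 * {y : ℝ | |(|y| - e)| ≤ |x|}.indicator 1 y) ∂μ :=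
          norm_integral_le_of_norm_le (hlin.add hind)
            (ae_of_all _ fun y => abs_truncSq_add_sub_le e x y)
      _ = 2 * |x| * ∫ y, |y| ∂μ + x ^ 2 +
            e ^ 2 * ∫ y, {y : ℝ | |(|y| - e)| ≤ |x|}.indicator 1 y ∂μ := by
          rw [integral_add hlin hind,
            integral_add (hμ.integrable_abs.const_mul _) (integrable_const _), integral_const_mul,
            integral_const_mul, integral_const, probReal_univ, one_smul]
      _ ≤ 2 * |x| * (C * e) + |x| * (4 * e) + e ^ 2 * (|x| * β) := by
          gcongr
          exacts [hμ.integral_abs_le, hμ.integral_indicator_le (abs_nonneg x) hx]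
      _ = ((2 * C + 4) * e + e ^ 2 * β) * |x| := by ring
  · rw [min_eq_right hx, ← Real.norm_eq_abs]
    calc _ ≤ ∫ _, e ^ 2 ∂μ := norm_integral_le_of_norm_le (integrable_const _)
          (ae_of_all _ fun y => abs_truncSq_add_sub_le_sq e x y)
      _ = e ^ 2 := by simp
      _ ≤ ((2 * C + 4) * e + e ^ 2 * β) * (e / 4) := by
          nlinarith [mul_nonneg hC he.le, mul_nonneg (mul_nonneg (sq_nonneg e) hβ) he.le]

/- A first-order expansion: the linear term is controlled by the truncated mean, which is much
smaller than the first absolute moment. -/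
lemma abs_integral_truncSq_add_sub_le_of_abs_le (hμ : IsRegularAtThreshold C β m e μ) {a : ℝ}
    (ha : |a| ≤ e / 4) :
    |∫ y, truncSq e (y + a) ∂μ - ∫ y, truncSq e y ∂μ| ≤
      2 * |a| * m + a ^ 2 + 3 * e ^ 2 * (|a| * β) := by
  have hind := (integrable_indicator (μ := μ) e |a|).const_mul (3 * e ^ 2)
  have hmean : Integrable ({y : ℝ | |y| ≤ e}.indicator (fun y => y)) μ :=
    ((integrable_norm_iff measurable_id.aestronglyMeasurable).mp hμ.integrable_abs).indicator
      (measurableSet_abs_le e)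
  have hdiff : Integrable (fun y => truncSq e (y + a) - truncSq e y) μ :=
    (integrable_truncSq_add e a μ).sub (by simpa using integrable_truncSq_add e 0 μ)
  set mean := ∫ y, {y : ℝ | |y| ≤ e}.indicator (fun y => y) y ∂μ
  have hremainder : |∫ y, (truncSq e (y + a) - truncSq e y) ∂μ - 2 * a * mean| ≤
      a ^ 2 + 3 * e ^ 2 * (|a| * β) := by
    rw [← integral_const_mul, ← integral_sub hdiff (hmean.const_mul (2 * a)),
      ← Real.norm_eq_abs]
    calc _ ≤ ∫ y, (a ^ 2 + 3 * e ^ 2 * {y : ℝ | |(|y| - e)| ≤ |a|}.indicator 1 y) ∂μ :=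
          norm_integral_le_of_norm_le ((integrable_const _).add hind)
            (ae_of_all _ fun y => abs_truncSq_add_sub_sub_le ha y)
      _ = a ^ 2 + 3 * e ^ 2 * ∫ y, {y : ℝ | |(|y| - e)| ≤ |a|}.indicator 1 y ∂μ := by
          rw [integral_add (integrable_const _) hind, integral_const_mul, integral_const,
            probReal_univ, one_smul]
      _ ≤ a ^ 2 + 3 * e ^ 2 * (|a| * β) := by
          gcongr
          exact hμ.integral_indicator_le (abs_nonneg a) ha
  have hlinear : |2 * a * mean| ≤ 2 * |a| * m := by
    rw [abs_mul, abs_mul, abs_two]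
    gcongr
    exact hμ.abs_truncatedMean_le
  rw [integral_truncSq_add_sub_integral]
  linarith [abs_sub_abs_le_abs_sub (∫ y, (truncSq e (y + a) - truncSq e y) ∂μ) (2 * a * mean)]

end IsRegularAtThreshold

/-! ### Interpolation between the two laws -/

/-- The laws `(μ s)_{s > 0}` are the marginals of a Lévy process with characteristic exponent
`ψ`. -/
structure HasLevyExponent (ψ : ℝ → ℂ) (μ : ℝ → Measure ℝ) : Prop where
  isProbabilityMeasure : ∀ s, 0 < s → IsProbabilityMeasure (μ s)
  charFun_eq : ∀ s, 0 < s → ∀ u, charFun (μ s) u = Complex.exp (s * ψ u)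

lemma HasLevyExponent.exists_of_nonneg {ψ : ℝ → ℂ} {μ : ℝ → Measure ℝ} (hμ : HasLevyExponent ψ μ)
    {s : ℝ} (hs : 0 ≤ s) :
    ∃ ν : Measure ℝ, IsProbabilityMeasure ν ∧ ∀ u, charFun ν u = Complex.exp (s * ψ u) := by
  rcases hs.eq_or_lt with rfl | hs
  · exact ⟨Measure.dirac 0, inferInstance, fun u => by simp [charFun_dirac]⟩
  · exact ⟨μ s, hμ.isProbabilityMeasure s hs, hμ.charFun_eq s hs⟩

lemma charFun_eq_integral_exp_I_mul_mul (μ : Measure ℝ) (u : ℝ) :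
    charFun μ u = ∫ x : ℝ, Complex.exp (Complex.I * u * x) ∂μ := by
  rw [charFun_apply_real]
  congr with x
  ring_nf

lemma sign_mul_of_pos {a : ℝ} (ha : 0 < a) (u : ℝ) : Real.sign (a * u) = Real.sign u := by
  rcases lt_trichotomy u 0 with hu | rfl | hu
  · rw [Real.sign_of_neg hu, Real.sign_of_neg (mul_neg_of_pos_of_neg ha hu)]
  · rw [mul_zero]
  · rw [Real.sign_of_pos hu, Real.sign_of_pos (mul_pos ha hu)]

lemma stablePart_mul (Y Cp Cm : ℝ) {a : ℝ} (ha : 0 < a) (u : ℝ) :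
    stablePart Y Cp Cm (a * u) = ((a ^ Y : ℝ) : ℂ) * stablePart Y Cp Cm u := by
  rw [stablePart, stablePart, sign_mul_of_pos ha, abs_mul, abs_of_pos ha,
    Real.mul_rpow ha.le (abs_nonneg u)]
  push_cast
  ring

@[fun_prop]
lemma measurable_stablePart (Y Cp Cm : ℝ) : Measurable (stablePart Y Cp Cm) := by
  have hsign : Measurable Real.sign := by
    unfold Real.sign
    exact .ite (measurableSet_lt measurable_id measurable_const) measurable_const
      (.ite (measurableSet_lt measurable_const measurable_id) measurable_const measurable_const)
  unfold stablePart
  fun_prop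

lemma exists_norm_stablePart_le {Y Cp Cm : ℝ} (hY1 : 1 < Y) (hY2 : Y < 2) (hCp : 0 ≤ Cp)
    (hCm : 0 ≤ Cm) (hC : 0 < Cp + Cm) :
    ∃ K, 0 ≤ K ∧ ∀ u, ‖stablePart Y Cp Cm u‖ ≤ K * |u| ^ Y := by
  have : 0 ≤ ∫ x : ℝ, min |x| 1 * |x| ^ (-Y) := integral_nonneg fun x => by positivity
  refine ⟨3 * ((Cp + Cm) * 1) * ∫ x : ℝ, min |x| 1 * |x| ^ (-Y), by positivity, fun u => ?_⟩
  rw [← norm_neg, ← integral_compExp_mul_levyDensity_one hY1 hY2 hCp hCm hC]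
  exact norm_integral_compExp_I_mul_mul_le hY1 hY2
    (abs_levyDensity_le_of_abs_le hCp hCm (M := 1) (by simp)) u

lemma IsLowerOrderDensity.exists_norm_jumpExponent_sub_le {Y : ℝ} {κ : ℝ → ℝ}
    (hκ : IsLowerOrderDensity Y κ) (hY1 : 1 < Y) (hY2 : Y < 2) :
    ∃ K, 0 ≤ K ∧ ∀ u : ℝ,
      ‖jumpExponent κ u - Complex.I * u * (∫ x, x * κ x : ℝ)‖ ≤ K * |u| ^ Y := by
  obtain ⟨K, hK⟩ := hκ.exists_abs_le
  have hK0 : 0 ≤ K := by simpa using (abs_nonneg _).trans (hK 1)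
  have : 0 ≤ ∫ x : ℝ, min |x| 1 * |x| ^ (-Y) := integral_nonneg fun x => by positivity
  refine ⟨3 * K * ∫ x : ℝ, min |x| 1 * |x| ^ (-Y), by positivity, fun u => ?_⟩
  rw [← integral_compExp_mul_eq_jumpExponent_sub hκ.measurable
    (hκ.integrable_abs_mul_abs hY1 hY2)]
  exact norm_integral_compExp_I_mul_mul_le hY1 hY2 hK u

lemma jumpExponent_const_mul (c : ℝ) (κ : ℝ → ℝ) (u : ℝ) :
    jumpExponent (fun x => c * κ x) u = c * jumpExponent κ u := by
  rw [jumpExponent, jumpExponent, ← integral_const_mul]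
  congr with x
  push_cast
  ring

/-- Laws `lam t`, `t ∈ [0, 1]`, with the exponent of `X̃_h` at `t = 0` and that of `X_h`, up to a
drift, at `t = 1`, from which a Gaussian law of variance `(1 - h^{1 - Y/2}) σ² h` has been
removed. Only the contribution `χ` of the perturbation of the Lévy density depends on `t`. -/
structure IsInterpolation (Y Cp Cm σ h : ℝ) (χ : ℝ → ℂ) (lam : ℝ → Measure ℝ) : Prop where
  isProbabilityMeasure : ∀ t ∈ Icc (0 : ℝ) 1, IsProbabilityMeasure (lam t)
  charFun_eq : ∀ t ∈ Icc (0 : ℝ) 1, ∀ u, charFun (lam t) u =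
    Complex.exp (-(h * stablePart Y Cp Cm u) - (h ^ (1 - Y / 2) * (σ ^ 2 * h) * u ^ 2 / 2 : ℝ) +
      t * (h * χ u))

section Interpolation

variable {Y Cp Cm σ h c : ℝ} {χ : ℝ → ℂ} {μJ μT : ℝ → Measure ℝ}

lemma HasLevyExponent.exists_centred
    (hJ : HasLevyExponent (fun u => Complex.I * c * u - stablePart Y Cp Cm u + χ u) μJ)
    {s : ℝ} (hs : 0 ≤ s) :
    ∃ ν : Measure ℝ, IsProbabilityMeasure ν ∧
      ∀ u, charFun ν u = Complex.exp (s * (-stablePart Y Cp Cm u + χ u)) := by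
  obtain ⟨ν, hν, hcf⟩ := hJ.exists_of_nonneg hs
  refine ⟨ν.map (· + -(c * s)), Measure.isProbabilityMeasure_map (by fun_prop), fun u => ?_⟩
  rw [charFun_map_add_const, hcf, ← Complex.exp_add]
  congr 1
  simp only [RCLike.inner_apply, conj_trivial]
  push_cast
  ring

/- Rescaling `X̃_s` by `√h` at time `s = r h^{1 - Y/2}` gives stable jumps as over a time `r h`, but
a Gaussian part of the smaller variance `r h^{1 - Y/2} σ² h`. -/
lemma HasLevyExponent.exists_rescaled
    (hT : HasLevyExponent (fun u => -(σ ^ 2 * u ^ 2 / 2) - stablePart Y Cp Cm u) μT) (hh : 0 < h)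
    {r : ℝ} (hr : 0 ≤ r) :
    ∃ ν : Measure ℝ, IsProbabilityMeasure ν ∧ ∀ u, charFun ν u =
      Complex.exp (-(r * h * stablePart Y Cp Cm u) -
        (r * (h ^ (1 - Y / 2) * (σ ^ 2 * h) * u ^ 2 / 2) : ℝ)) := by
  obtain ⟨ν, hν, hcf⟩ := hT.exists_of_nonneg (s := r * h ^ (1 - Y / 2)) (by positivity)
  refine ⟨ν.map (√h * ·), Measure.isProbabilityMeasure_map (by fun_prop), fun u => ?_⟩
  have hscale : ((h ^ (1 - Y / 2) : ℝ) : ℂ) * ((√h ^ Y : ℝ) : ℂ) = h := by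
    rw [← Complex.ofReal_mul, Real.sqrt_eq_rpow, ← Real.rpow_mul hh.le, ← Real.rpow_add hh,
      show 1 - Y / 2 + 1 / 2 * Y = 1 by ring, Real.rpow_one]
  have hsqrt : ((√h : ℝ) : ℂ) ^ 2 = h := mod_cast Real.sq_sqrt hh.le
  rw [charFun_map_mul, hcf, stablePart_mul Y Cp Cm (Real.sqrt_pos.mpr hh)]
  congr 1
  push_cast
  rw [mul_pow, hsqrt]
  linear_combination -(r * stablePart Y Cp Cm u) * hscale

lemma HasLevyExponent.exists_isInterpolation
    (hJ : HasLevyExponent (fun u => Complex.I * c * u - stablePart Y Cp Cm u + χ u) μJ)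
    (hT : HasLevyExponent (fun u => -(σ ^ 2 * u ^ 2 / 2) - stablePart Y Cp Cm u) μT)
    (hh : 0 < h) : ∃ lam, IsInterpolation Y Cp Cm σ h χ lam := by
  have hex : ∀ t ∈ Icc (0 : ℝ) 1, ∃ lam : Measure ℝ, IsProbabilityMeasure lam ∧ ∀ u,
      charFun lam u = Complex.exp (-(h * stablePart Y Cp Cm u) -
        (h ^ (1 - Y / 2) * (σ ^ 2 * h) * u ^ 2 / 2 : ℝ) + t * (h * χ u)) := by
    rintro t ⟨ht0, ht1⟩
    obtain ⟨ν₁, hν₁, hcf₁⟩ := hJ.exists_centred (s := t * h) (by positivity)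
    obtain ⟨ν₂, hν₂, hcf₂⟩ := hT.exists_rescaled hh (sub_nonneg.mpr ht1)
    refine ⟨gaussianReal 0 (t * (h ^ (1 - Y / 2) * (σ ^ 2 * h))).toNNReal ∗ (ν₁ ∗ ν₂),
      inferInstance, fun u => ?_⟩
    rw [charFun_conv, charFun_conv, hcf₁, hcf₂, charFun_gaussianReal, ← Complex.exp_add,
      ← Complex.exp_add, Real.coe_toNNReal _ (by positivity)]
    congr 1
    push_cast
    ring
  choose! lam hlam using hex
  exact ⟨lam, fun t ht => (hlam t ht).1, fun t ht => (hlam t ht).2⟩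

end Interpolation

namespace IsInterpolation

variable {Y Cp Cm σ h c : ℝ} {χ : ℝ → ℂ} {lam μJ μT : ℝ → Measure ℝ} {v w : ℝ≥0}

lemma gaussianReal_conv_zero (hlam : IsInterpolation Y Cp Cm σ h χ lam)
    (hT : HasLevyExponent (fun u => -(σ ^ 2 * u ^ 2 / 2) - stablePart Y Cp Cm u) μT) (hh : 0 < h)
    (hv : v = (1 - h ^ (1 - Y / 2)) * (σ ^ 2 * h)) : gaussianReal 0 v ∗ lam 0 = μT h := by
  have := hlam.isProbabilityMeasure 0 (by simp)
  have := hT.isProbabilityMeasure h hh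
  refine Measure.ext_of_charFun (funext fun u => ?_)
  rw [charFun_conv, hlam.charFun_eq 0 (by simp), hT.charFun_eq h hh, charFun_gaussianReal,
    ← Complex.exp_add, hv]
  congr 1
  push_cast
  ring

lemma map_add_gaussianReal_conv_one (hlam : IsInterpolation Y Cp Cm σ h χ lam)
    (hJ : HasLevyExponent (fun u => Complex.I * c * u - stablePart Y Cp Cm u + χ u) μJ)
    (hh : 0 < h) (hv : v = (1 - h ^ (1 - Y / 2)) * (σ ^ 2 * h)) (hw : w = σ ^ 2 * h) :
    (gaussianReal 0 v ∗ lam 1).map (· + c * h) = gaussianReal 0 w ∗ μJ h := by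
  have := hlam.isProbabilityMeasure 1 (by simp)
  have := hJ.isProbabilityMeasure h hh
  have : IsProbabilityMeasure ((gaussianReal 0 v ∗ lam 1).map (· + c * h)) :=
    Measure.isProbabilityMeasure_map (by fun_prop)
  refine Measure.ext_of_charFun (funext fun u => ?_)
  rw [charFun_map_add_const, charFun_conv, charFun_conv, hlam.charFun_eq 1 (by simp),
    hJ.charFun_eq h hh, charFun_gaussianReal, charFun_gaussianReal, ← Complex.exp_add,
    ← Complex.exp_add, ← Complex.exp_add, hv, hw]
  congr 1
  simp only [RCLike.inner_apply, conj_trivial]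
  push_cast
  ring

lemma hasStableLikeExponent (hlam : IsInterpolation Y Cp Cm σ h χ lam) (hh : 0 < h) {k K₁ K₂ : ℝ}
    (hK₁ : ∀ u, ‖stablePart Y Cp Cm u‖ ≤ K₁ * |u| ^ Y)
    (hK₂ : ∀ u : ℝ, ‖χ u - Complex.I * u * k‖ ≤ K₂ * |u| ^ Y) {t : ℝ} (ht : t ∈ Icc (0 : ℝ) 1) :
    HasStableLikeExponent Y ((K₁ + K₂) * h) (σ ^ 2 / 2 * h ^ (2 - Y / 2)) (t * (h * k))
      (lam t) := by
  refine ⟨fun u => -(h * stablePart Y Cp Cm u) + (t * h : ℝ) * (χ u - Complex.I * u * k) -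
    (h ^ (1 - Y / 2) * (σ ^ 2 * h) * u ^ 2 / 2 : ℝ), fun u => ?_, fun u => ?_⟩
  · rw [hlam.charFun_eq t ht]
    congr 1
    push_cast
    ring
  · obtain ⟨ht0, ht1⟩ := ht
    have hth : t * h ≤ h := mul_le_of_le_one_left hh.le ht1
    have : 0 ≤ K₂ * |u| ^ Y := (norm_nonneg _).trans (hK₂ u)
    calc _ ≤ h * ‖stablePart Y Cp Cm u‖ + t * h * ‖χ u - Complex.I * u * k‖ +
            h ^ (1 - Y / 2) * (σ ^ 2 * h) * u ^ 2 / 2 := by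
          refine (norm_sub_le _ _).trans (add_le_add ((norm_add_le _ _).trans_eq ?_) ?_)
          · rw [norm_neg, norm_mul, norm_mul, Complex.norm_real, Complex.norm_real,
              Real.norm_of_nonneg hh.le, Real.norm_of_nonneg (by positivity)]
          · rw [Complex.norm_real, Real.norm_of_nonneg (by positivity)]
      _ ≤ h * (K₁ * |u| ^ Y) + h * (K₂ * |u| ^ Y) +
            h ^ (1 - Y / 2) * (σ ^ 2 * h) * u ^ 2 / 2 := by
          gcongr
          exacts [hK₁ u, hK₂ u]
      _ = _ := by
          rw [show 2 - Y / 2 = (1 - Y / 2) + 1 by ring, Real.rpow_add_one hh.ne']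
          ring

end IsInterpolation

/-! ### Rates and the small-time regime -/

/-- The four remainder rates of the expansion at time `h` and threshold `e`. -/
def remainderRate (Y δ h e : ℝ) : Fin 4 → ℝ :=
  ![h ^ 3 * e ^ (-Y - 2), h ^ ((3 : ℝ) / 2) * e ^ (1 - Y / 2), h ^ 2 * e ^ (2 - 2 * Y),
    h ^ (1 - δ) * e ^ (3 - Y + δ * Y)]

lemma remainderRate_pos (Y δ : ℝ) {h e : ℝ} (hh : 0 < h) (he : 0 < e) (i : Fin 4) :
    0 < remainderRate Y δ h e i := by
  have h0 : 0 < h ^ 3 * e ^ (-Y - 2) := by positivity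
  have h1 : 0 < h ^ ((3 : ℝ) / 2) * e ^ (1 - Y / 2) := by positivity
  have h2 : 0 < h ^ 2 * e ^ (2 - 2 * Y) := by positivity
  have h3 : 0 < h ^ (1 - δ) * e ^ (3 - Y + δ * Y) := by positivity
  fin_cases i
  exacts [h0, h1, h2, h3]

lemma remainderRate_le_sum (Y δ : ℝ) {h e : ℝ} (hh : 0 < h) (he : 0 < e) (i : Fin 4) :
    remainderRate Y δ h e i ≤ ∑ j, remainderRate Y δ h e j :=
  Finset.single_le_sum (fun j _ => (remainderRate_pos Y δ hh he j).le) (Finset.mem_univ i)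

lemma remainderRate_add_le_sum (Y δ : ℝ) {h e : ℝ} (hh : 0 < h) (he : 0 < e) {i j : Fin 4}
    (hij : i ≠ j) :
    remainderRate Y δ h e i + remainderRate Y δ h e j ≤ ∑ k, remainderRate Y δ h e k :=
  Finset.add_le_sum (fun k _ => (remainderRate_pos Y δ hh he k).le) (Finset.mem_univ i)
    (Finset.mem_univ j) hij

/-- The regime in which a time `h` and a threshold `e` are compared: `√h ≪ e ≪ 1`, with the drifts
`c h` and `k h` below the threshold. -/
structure IsSmallTimeRegime (Y c k h e : ℝ) : Prop where
  time_pos : 0 < h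
  threshold_pos : 0 < e
  threshold_le_one : e ≤ 1
  time_le_sq : h ≤ e ^ 2
  time_rpow_le : h ^ (1 - Y / 2) ≤ 1 / 2
  abs_drift_le : |c * h| ≤ e / 4
  abs_mean_le : |h * k| ≤ e / 8

lemma eventually_time_rpow_le {p : ℝ} (hp : 0 < p) : ∀ᶠ h in 𝓝[>] (0 : ℝ), h ^ p ≤ 1 / 2 := by
  have htendsto : Tendsto (fun h : ℝ => h ^ p) (𝓝 0) (𝓝 0) := by
    simpa [Real.zero_rpow hp.ne'] using (Real.continuousAt_rpow_const 0 p (Or.inr hp.le)).tendsto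
  exact (htendsto.mono_left nhdsWithin_le_nhds).eventually_le_const (by norm_num)

lemma eventually_isSmallTimeRegime {Y : ℝ} (hY2 : Y < 2) (c k : ℝ) {ε : ℝ → ℝ}
    (hε0 : Tendsto ε (𝓝[>] 0) (𝓝 0)) (hεsqrt : Tendsto (fun h => ε h / √h) (𝓝[>] 0) atTop) :
    ∀ᶠ h in 𝓝[>] (0 : ℝ), IsSmallTimeRegime Y c k h (ε h) := by
  filter_upwards [eventually_mem_nhdsWithin, hε0.eventually_le_const one_pos,
    eventually_time_rpow_le (show 0 < 1 - Y / 2 by linarith),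
    hεsqrt.eventually_ge_atTop (1 + 4 * |c| + 8 * |k|)] with h (hh : 0 < h) hε1 hhY hratio
  have hs : 0 < √h := Real.sqrt_pos.mpr hh
  have hsq : √h ^ 2 = h := Real.sq_sqrt hh.le
  have hc := mul_nonneg (abs_nonneg c) hs.le
  have hk := mul_nonneg (abs_nonneg k) hs.le
  rw [le_div_iff₀ hs] at hratio
  have hsε : √h ≤ ε h := by linarith
  have hhs : h ≤ √h := by nlinarith
  have hch : |c| * h ≤ |c| * √h := by gcongr
  have hkh : |k| * h ≤ |k| * √h := by gcongr
  refine ⟨hh, by linarith, hε1, hsq.symm.trans_le (by gcongr), hhY, ?_, ?_⟩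
  · rw [abs_mul, abs_of_pos hh]
    linarith
  · rw [abs_mul, abs_of_pos hh]
    linarith

namespace IsSmallTimeRegime

variable {Y c k h e : ℝ}

lemma sqrt_time_le (hr : IsSmallTimeRegime Y c k h e) : √h ≤ e :=
  Real.sqrt_le_iff.mpr ⟨hr.threshold_pos.le, hr.time_le_sq⟩

lemma threshold_rpow_le (hr : IsSmallTimeRegime Y c k h e) {p p' : ℝ} (hp : p' ≤ p) :
    e ^ p ≤ e ^ p' :=
  Real.rpow_le_rpow_of_exponent_ge hr.threshold_pos hr.threshold_le_one hp

lemma inv_threshold_pow_three_le (hr : IsSmallTimeRegime Y c k h e) (hY1 : 1 < Y) :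
    (e ^ 3)⁻¹ ≤ e ^ (-Y - 2) := by
  rw [← Real.rpow_natCast, ← Real.rpow_neg hr.threshold_pos.le]
  exact hr.threshold_rpow_le (by push_cast; linarith)

lemma mul_sq_mul_thresholdDensityRate_le (hr : IsSmallTimeRegime Y c k h e) (hY1 : 1 < Y)
    (hY2 : Y < 2) : h * (e ^ 2 * thresholdDensityRate Y h e) ≤
      h ^ 3 * e ^ (-Y - 2) + h ^ ((3 : ℝ) / 2) * e ^ (1 - Y / 2) := by
  have hh := hr.time_pos
  have he := hr.threshold_pos
  have : 0 < √h := Real.sqrt_pos.mpr hh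
  have hsq : √h * √h = h := Real.mul_self_sqrt hh.le
  have hh32 : h ^ ((3 : ℝ) / 2) = h * √h := by
    rw [Real.sqrt_eq_rpow, show (3 / 2 : ℝ) = 1 / 2 + 1 by norm_num, Real.rpow_add_one hh.ne',
      mul_comm]
  have he2 : e ^ 2 * e ^ (-Y) = e ^ (2 - Y) := by
    rw [← Real.rpow_natCast e 2, ← Real.rpow_add he]
    rfl
  calc _ = h * (√h * √h) * (h ^ 2 * (√h)⁻¹ * (e ^ 4)⁻¹) + h * √h * (e ^ 2 * e ^ (-Y)) := by
        rw [hsq, thresholdDensityRate]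
        field_simp
    _ = h ^ 3 * (√h * (e ^ 4)⁻¹) + h * √h * e ^ (2 - Y) := by
        rw [he2]
        field_simp
    _ ≤ h ^ 3 * (e * (e ^ 4)⁻¹) + h * √h * e ^ (1 - Y / 2) := by
        gcongr h ^ 3 * (?_ * _) + h * √h * ?_
        exacts [hr.sqrt_time_le, hr.threshold_rpow_le (by linarith)]
    _ = h ^ 3 * (e ^ 3)⁻¹ + h ^ ((3 : ℝ) / 2) * e ^ (1 - Y / 2) := by
        rw [hh32]
        field_simp
    _ ≤ _ := by
        gcongr
        exact hr.inv_threshold_pow_three_le hY1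

lemma mul_truncatedMeanRate_le (hr : IsSmallTimeRegime Y c k h e) (hY1 : 1 < Y) :
    h * truncatedMeanRate Y h e ≤ h ^ 3 * e ^ (-Y - 2) + h ^ 2 * e ^ (2 - 2 * Y) := by
  have hh := hr.time_pos
  have he := hr.threshold_pos
  calc h * truncatedMeanRate Y h e = h ^ 3 * (h * (e ^ 5)⁻¹) + h ^ 2 * e ^ (1 - Y) := by
        rw [truncatedMeanRate]
        field_simp
    _ ≤ h ^ 3 * (e ^ 2 * (e ^ 5)⁻¹) + h ^ 2 * e ^ (2 - 2 * Y) := by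
        gcongr h ^ 3 * (?_ * _) + h ^ 2 * ?_
        exacts [hr.time_le_sq, hr.threshold_rpow_le (by linarith)]
    _ = h ^ 3 * (e ^ 3)⁻¹ + h ^ 2 * e ^ (2 - 2 * Y) := by field_simp
    _ ≤ _ := by
        gcongr
        exact hr.inv_threshold_pow_three_le hY1

lemma time_sq_le (hr : IsSmallTimeRegime Y c k h e) (hY1 : 1 < Y) :
    h ^ 2 ≤ h ^ 2 * e ^ (2 - 2 * Y) :=
  le_mul_of_one_le_right (sq_nonneg h)
    (Real.one_le_rpow_of_pos_of_le_one_of_nonpos hr.threshold_pos hr.threshold_le_one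
      (by linarith))

lemma mul_threshold_rpow_le (hr : IsSmallTimeRegime Y c k h e) (hY2 : Y < 2) {δ : ℝ}
    (hδ : 0 < δ) : h * (e * e ^ (2 - Y)) ≤ h ^ (1 - δ) * e ^ (3 - Y + δ * Y) := by
  have hh := hr.time_pos
  have he := hr.threshold_pos
  have hhe : h ≤ e ^ Y := by
    refine hr.time_le_sq.trans ?_
    rw [← Real.rpow_natCast e 2]
    exact hr.threshold_rpow_le (by push_cast; linarith)
  calc h * (e * e ^ (2 - Y)) = h ^ (1 - δ) * (h ^ δ * e ^ (3 - Y)) := by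
        rw [← mul_assoc (h ^ (1 - δ)), ← Real.rpow_add hh, sub_add_cancel, Real.rpow_one,
          mul_comm e, ← Real.rpow_add_one he.ne']
        ring_nf
    _ ≤ h ^ (1 - δ) * ((e ^ Y) ^ δ * e ^ (3 - Y)) := by gcongr
    _ = h ^ (1 - δ) * e ^ (3 - Y + δ * Y) := by
        rw [← Real.rpow_mul he.le, ← Real.rpow_add he]
        ring_nf

lemma mul_jump_le_sum_remainderRate (hr : IsSmallTimeRegime Y c k h e) (hY1 : 1 < Y) (hY2 : Y < 2)
    {δ C Cκ I : ℝ} (hδ : 0 < δ) (hC : 0 ≤ C) (hCκ : 0 ≤ Cκ) (hI : I ≤ Cκ * (e / 4) ^ (2 - Y)) :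
    h * (((2 * C + 4) * e + e ^ 2 * (C * thresholdDensityRate Y h e)) * I) ≤
      Cκ * (3 * C + 4) * ∑ i, remainderRate Y δ h e i := by
  have hh := hr.time_pos
  have he := hr.threshold_pos
  have hβ : 0 ≤ thresholdDensityRate Y h e := by
    rw [thresholdDensityRate]
    positivity
  have hdensity := (hr.mul_sq_mul_thresholdDensityRate_le hY1 hY2).trans
    (remainderRate_add_le_sum Y δ hh he (i := 0) (j := 1) (by decide))
  have hstable := (hr.mul_threshold_rpow_le hY2 hδ).trans (remainderRate_le_sum Y δ hh he 3)
  have hone : e ^ (2 - Y) ≤ 1 := Real.rpow_le_one he.le hr.threshold_le_one (by linarith)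
  have hI' : I ≤ Cκ * e ^ (2 - Y) := hI.trans (by gcongr; linarith)
  calc _ ≤ h * (((2 * C + 4) * e + e ^ 2 * (C * thresholdDensityRate Y h e)) *
          (Cκ * e ^ (2 - Y))) := by gcongr
    _ = Cκ * ((2 * C + 4) * (h * (e * e ^ (2 - Y))) +
          C * (h * (e ^ 2 * thresholdDensityRate Y h e) * e ^ (2 - Y))) := by ring
    _ ≤ Cκ * ((2 * C + 4) * ∑ i, remainderRate Y δ h e i +
          C * (∑ i, remainderRate Y δ h e i)) := by
        gcongr
        exact (mul_le_of_le_one_right (by positivity) hone).trans hdensity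
    _ = _ := by ring

lemma shift_le_sum_remainderRate (hr : IsSmallTimeRegime Y c k h e) (hY1 : 1 < Y) (hY2 : Y < 2)
    {C : ℝ} (δ : ℝ) (hC : 0 ≤ C) :
    2 * |c * h| * (|h * k| + C * truncatedMeanRate Y h e) + (c * h) ^ 2 +
        3 * e ^ 2 * (|c * h| * (C * thresholdDensityRate Y h e)) ≤
      |c| * (2 * |k| + |c| + 5 * C) * ∑ i, remainderRate Y δ h e i := by
  have hh := hr.time_pos
  have he := hr.threshold_pos
  have hdensity := (hr.mul_sq_mul_thresholdDensityRate_le hY1 hY2).trans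
    (remainderRate_add_le_sum Y δ hh he (i := 0) (j := 1) (by decide))
  have hmean := (hr.mul_truncatedMeanRate_le hY1).trans
    (remainderRate_add_le_sum Y δ hh he (i := 0) (j := 2) (by decide))
  have hsq := (hr.time_sq_le hY1).trans (remainderRate_le_sum Y δ hh he 2)
  calc _ = |c| * ((2 * |k| + |c|) * h ^ 2 + 2 * C * (h * truncatedMeanRate Y h e) +
          3 * C * (h * (e ^ 2 * thresholdDensityRate Y h e))) := by
        rw [← sq_abs, abs_mul, abs_mul, abs_of_pos hh]
        ring
    _ ≤ |c| * ((2 * |k| + |c|) * ∑ i, remainderRate Y δ h e i +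
          2 * C * (∑ i, remainderRate Y δ h e i) + 3 * C * (∑ i, remainderRate Y δ h e i)) := by
        gcongr
    _ = _ := by ring

end IsSmallTimeRegime

/-! ### Comparison of truncated second moments -/

lemma IsLowerOrderDensity.exists_isRegularAtThreshold_of_isInterpolation {Y Cp Cm σ : ℝ}
    {κ : ℝ → ℝ} (c : ℝ) (hκ : IsLowerOrderDensity Y κ) (hY1 : 1 < Y) (hY2 : Y < 2) (hCp : 0 ≤ Cp)
    (hCm : 0 ≤ Cm) (hC : 0 < Cp + Cm) (hσ : 0 < σ) :
    ∃ C, 0 ≤ C ∧ ∀ (h e : ℝ) (lam : ℝ → Measure ℝ) (v : ℝ≥0),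
      IsSmallTimeRegime Y c (∫ x, x * κ x) h e →
      IsInterpolation Y Cp Cm σ h (jumpExponent κ) lam →
      v = (1 - h ^ (1 - Y / 2)) * (σ ^ 2 * h) → ∀ t ∈ Icc (0 : ℝ) 1,
      IsRegularAtThreshold C (C * thresholdDensityRate Y h e)
        (|t * (h * ∫ x, x * κ x)| + C * truncatedMeanRate Y h e) e
        (gaussianReal 0 v ∗ lam t) := by
  obtain ⟨K₁, hK₁0, hK₁⟩ := exists_norm_stablePart_le hY1 hY2 hCp hCm hC
  obtain ⟨K₂, hK₂0, hK₂⟩ := hκ.exists_norm_jumpExponent_sub_le hY1 hY2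
  have hK : 0 ≤ K₁ + K₂ + σ ^ 2 / 2 := by positivity
  obtain ⟨C, hC0, hreg⟩ := HasStableLikeExponent.exists_isRegularAtThreshold hY1 hY2 hK hσ
  refine ⟨C, hC0, fun h e lam v hr hlam hv t ht => ?_⟩
  have hh := hr.time_pos
  have hp : 0 ≤ h ^ (1 - Y / 2) := by positivity
  have hσh : 0 < σ ^ 2 * h := by positivity
  refine hreg h e _ v (lam t) (hlam.isProbabilityMeasure t ht) hh hr.threshold_pos
    hr.threshold_le_one hr.time_le_sq ?_ ?_ ?_
    ((hlam.hasStableLikeExponent hh hK₁ hK₂ ht).mono ?_ ?_)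
  · rw [hv]
    nlinarith [hr.time_rpow_le]
  · rw [hv]
    nlinarith
  · rw [abs_mul, abs_of_nonneg ht.1]
    exact (mul_le_of_le_one_left (abs_nonneg _) ht.2).trans hr.abs_mean_le
  · exact mul_le_mul_of_nonneg_right (le_add_of_nonneg_right (by positivity)) hh.le
  · exact mul_le_mul_of_nonneg_right (le_add_of_nonneg_left (by positivity)) (by positivity)

lemma IsInterpolation.abs_integral_truncSq_sub_le {Y Cp Cm σ h e C β : ℝ} {κ m : ℝ → ℝ}
    {lam : ℝ → Measure ℝ} {v : ℝ≥0} (hlam : IsInterpolation Y Cp Cm σ h (jumpExponent κ) lam)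
    (hκ : IsLowerOrderDensity Y κ) (hY1 : 1 < Y) (hY2 : Y < 2) (hh : 0 < h) (he : 0 < e)
    (hv : v ≠ 0)
    (hreg : ∀ t ∈ Icc (0 : ℝ) 1, IsRegularAtThreshold C β (m t) e (gaussianReal 0 v ∗ lam t)) :
    |∫ y, truncSq e y ∂(gaussianReal 0 v ∗ lam 1) - ∫ y, truncSq e y ∂(gaussianReal 0 v ∗ lam 0)| ≤
      h * (((2 * C + 4) * e + e ^ 2 * β) * ∫ x, |κ x| * min |x| (e / 4)) := by
  set G := (2 * C + 4) * e + e ^ 2 * β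
  have habs (x : ℝ) : |h * κ x| = h * |κ x| := by rw [abs_mul, abs_of_pos hh]
  have hcharFun : ∀ t ∈ Icc (0 : ℝ) 1, ∀ u, charFun (lam t) u = Complex.exp
      (-(h * stablePart Y Cp Cm u) - (h ^ (1 - Y / 2) * (σ ^ 2 * h) * u ^ 2 / 2 : ℝ) +
        t * jumpExponent (fun x => h * κ x) u) := fun t ht u => by
    rw [hlam.charFun_eq t ht, jumpExponent_const_mul]
  have hfactor (x : ℝ) :
      |h * κ x| * (G * min |x| (e / 4)) = h * G * (|κ x| * min |x| (e / 4)) := by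
    rw [habs]
    ring
  have hint : Integrable fun x => |h * κ x| * (G * min |x| (e / 4)) := by
    simp_rw [hfactor]
    exact (hκ.integrable_abs_mul_min hY1 hY2 (by positivity)).const_mul _
  refine (abs_integral_gaussianReal_conv_sub_le hv (measurable_truncSq e) (integrable_truncSq e)
    (abs_truncSq_le e) (hκ.measurable.const_mul h)
    (by simpa only [habs, mul_left_comm] using
      (hκ.integrable_abs_mul_abs hY1 hY2).const_mul h) (by fun_prop) hlam.isProbabilityMeasure
    hcharFun (fun t ht x => ?_) hint).trans_eq ?_
  · have := hlam.isProbabilityMeasure t ht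
    exact (hreg t ht).abs_integral_truncSq_add_sub_le he x
  · simp_rw [hfactor, integral_const_mul, mul_assoc]

theorem exists_abs_integral_truncSq_sub_le {Y Cp Cm σ c δ : ℝ} {κ : ℝ → ℝ} {μJ μT : ℝ → Measure ℝ}
    (hY1 : 1 < Y) (hY2 : Y < 2) (hCp : 0 ≤ Cp) (hCm : 0 ≤ Cm) (hC : 0 < Cp + Cm) (hσ : 0 < σ)
    (hδ : 0 < δ) (hκ : IsLowerOrderDensity Y κ)
    (hJ : HasLevyExponent
      (fun u => Complex.I * c * u - stablePart Y Cp Cm u + jumpExponent κ u) μJ)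
    (hT : HasLevyExponent (fun u => -(σ ^ 2 * u ^ 2 / 2) - stablePart Y Cp Cm u) μT) :
    ∃ K, ∀ (h e : ℝ) (w : ℝ≥0), IsSmallTimeRegime Y c (∫ x, x * κ x) h e → w = σ ^ 2 * h →
      |∫ y, truncSq e y ∂(gaussianReal 0 w ∗ μJ h) - ∫ y, truncSq e y ∂(μT h)| ≤
        K * ∑ i, remainderRate Y δ h e i := by
  obtain ⟨C, hC0, hreg⟩ :=
    hκ.exists_isRegularAtThreshold_of_isInterpolation c hY1 hY2 hCp hCm hC hσ
  obtain ⟨Cκ, hCκ, hκle⟩ := hκ.exists_integral_abs_mul_min_le hY1 hY2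
  set k := ∫ x, x * κ x
  refine ⟨|c| * (2 * |k| + |c| + 5 * C) + Cκ * (3 * C + 4), fun h e w hr hw => ?_⟩
  have hh := hr.time_pos
  have he := hr.threshold_pos
  obtain ⟨lam, hlam⟩ := hJ.exists_isInterpolation hT hh
  have hvpos : 0 < (1 - h ^ (1 - Y / 2)) * (σ ^ 2 * h) :=
    mul_pos (by linarith [hr.time_rpow_le]) (by positivity)
  set v := ((1 - h ^ (1 - Y / 2)) * (σ ^ 2 * h)).toNNReal
  have hv : v = (1 - h ^ (1 - Y / 2)) * (σ ^ 2 * h) := Real.coe_toNNReal _ hvpos.le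
  have hreg' := hreg h e lam v hr hlam hv
  have := hlam.isProbabilityMeasure 1 (by simp)
  have hshift := (hreg' 1 (by simp)).abs_integral_truncSq_add_sub_le_of_abs_le hr.abs_drift_le
  rw [one_mul] at hshift
  have hjump := hlam.abs_integral_truncSq_sub_le hκ hY1 hY2 hh he
    (Real.toNNReal_pos.mpr hvpos).ne' hreg'
  rw [← hlam.map_add_gaussianReal_conv_one hJ hh hv hw, ← hlam.gaussianReal_conv_zero hT hh hv,
    integral_map (by fun_prop) (measurable_truncSq e).aestronglyMeasurable, add_mul]
  refine (abs_sub_le _ _ _).trans (add_le_add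
    (hshift.trans (hr.shift_le_sum_remainderRate hY1 hY2 δ hC0))
    (hjump.trans (hr.mul_jump_le_sum_remainderRate hY1 hY2 hδ hC0 hCκ (hκle _ (by positivity) ?_))))
  linarith [hr.threshold_le_one]

lemma isLowerOrderDensity_levyDensity_sub_one {Y Cp Cm : ℝ} {q : ℝ → ℝ} (hY : 0 < Y) (hCp : 0 ≤ Cp)
    (hCm : 0 ≤ Cm) (hqm : Measurable q) (hq0 : ∀ x, 0 ≤ q x) (hq_bdd : ∃ M : ℝ, ∀ x, q x ≤ M)
    (hq_taylor : ∃ αp αm : ℝ,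
      IntegrableOn (fun x => |q x - 1 - αp * x| * x ^ (-Y - 1)) (Ioc 0 1) ∧
      IntegrableOn (fun x => |q x - 1 - αm * x| * |x| ^ (-Y - 1)) (Ico (-1) 0)) :
    IsLowerOrderDensity Y (levyDensity Y Cp Cm fun x => q x - 1) := by
  obtain ⟨M, hM⟩ := hq_bdd
  obtain ⟨αp, αm, hp, hm⟩ := hq_taylor
  have hexponent : -1 - Y = -Y - 1 := by ring
  refine isLowerOrderDensity_levyDensity hY hCp hCm (hqm.sub_const 1) (M := M + 1)
    (αp := αp) (αm := αm)
    (fun x => abs_le.mpr ⟨?_, ?_⟩) (hp.congr_fun (fun x hx => ?_) measurableSet_Ioc)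
    (by rwa [hexponent])
  · linarith [hq0 x, hM x]
  · linarith [hM x]
  · rw [hexponent, abs_of_pos hx.1]

lemma exists_sum_eq_and_isBigO {α ι : Type*} [Fintype ι] [Nonempty ι] {l : Filter α} {s : Set α}
    {D : α → ℝ} {g : ι → α → ℝ} (hs : s ∈ l) (hg : ∀ i, ∀ a ∈ s, 0 < g i a)
    (hD : D =O[l] fun a => ∑ i, g i a) :
    ∃ R : ι → α → ℝ, (∀ a ∈ s, D a = ∑ i, R i a) ∧ ∀ i, R i =O[l] g i := by
  have hsum : ∀ a ∈ s, ∑ i, g i a ≠ 0 := fun a ha =>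
    (Finset.sum_pos (fun i _ => hg i a ha) Finset.univ_nonempty).ne'
  refine ⟨fun i a => D a * (g i a / ∑ j, g j a), fun a ha => ?_, fun i => ?_⟩
  · rw [← Finset.mul_sum, ← Finset.sum_div, div_self (hsum a ha), mul_one]
  · refine (hD.mul (isBigO_refl (fun a => g i a / ∑ j, g j a) l)).trans_eventuallyEq ?_
    filter_upwards [hs] with a ha
    exact mul_div_cancel₀ _ (hsum a ha)

section Laws

variable {Ω : Type*} [MeasurableSpace Ω] {P : Measure Ω} [IsProbabilityMeasure P]

lemma hasLevyExponent_map {ψ : ℝ → ℂ} {J : ℝ → Ω → ℝ} (hJ : ∀ h, Measurable (J h))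
    (hcf : ∀ h, 0 < h → ∀ u : ℝ,
      ∫ ω, Complex.exp (Complex.I * u * J h ω) ∂P = Complex.exp (h * ψ u)) :
    HasLevyExponent ψ fun h => P.map (J h) where
  isProbabilityMeasure h _ := Measure.isProbabilityMeasure_map (hJ h).aemeasurable
  charFun_eq h hh u := by
    rw [charFun_eq_integral_exp_I_mul_mul, integral_map (hJ h).aemeasurable
      (Measurable.aestronglyMeasurable (by fun_prop)), hcf h hh]

lemma hasLevyExponent_of_tildeCF {σ Y Cp Cm : ℝ} {μ : ℝ → Measure ℝ}
    (hμ : ∀ h, 0 < h → IsProbabilityMeasure (μ h))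
    (hcf : ∀ h, 0 < h → ∀ u : ℝ,
      ∫ x, Complex.exp (Complex.I * u * x) ∂(μ h) = tildeCF σ Y Cp Cm h u) :
    HasLevyExponent (fun u => -(σ ^ 2 * u ^ 2 / 2) - stablePart Y Cp Cm u) μ where
  isProbabilityMeasure := hμ
  charFun_eq h hh u := by
    rw [charFun_eq_integral_exp_I_mul_mul, hcf h hh, tildeCF]
    ring_nf

lemma map_mul_add_eq_gaussianReal_conv {W X : Ω → ℝ} (hWm : Measurable W)
    (hW : P.map W = gaussianReal 0 1) (hX : Measurable X) (hindep : IndepFun W X P) {s : ℝ}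
    {w : ℝ≥0} (hw : w = s ^ 2) :
    P.map (fun ω => s * W ω + X ω) = gaussianReal 0 w ∗ P.map X := by
  have hgauss : P.map (fun ω => s * W ω) = gaussianReal 0 w := by
    rw [← gaussianReal_zero_one_map_const_mul hw, ← hW, Measure.map_map (by fun_prop) hWm]
    rfl
  rw [← hgauss]
  exact (hindep.comp (measurable_const_mul s) measurable_id).map_add_eq_map_conv_map
    (hWm.const_mul s) hX

end Laws

theorem truncated_second_moment_difference_general {Ω : Type*} [MeasurableSpace Ω] (P : Measure Ω)
    [IsProbabilityMeasure P] (Y Cp Cm σ b : ℝ) (q : ℝ → ℝ) (hY1 : 1 < Y) (hY2 : Y < 2)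
    (hCp : 0 ≤ Cp) (hCm : 0 ≤ Cm) (hC : 0 < Cp + Cm) (hσ : 0 < σ) (hqm : Measurable q)
    (hq0 : ∀ x, 0 ≤ q x) (hq_bdd : ∃ M : ℝ, ∀ x, q x ≤ M)
    (hq_taylor : ∃ αp αm : ℝ,
      IntegrableOn (fun x => |q x - 1 - αp * x| * x ^ (-Y - 1)) (Ioc 0 1) ∧
      IntegrableOn (fun x => |q x - 1 - αm * x| * |x| ^ (-Y - 1)) (Ico (-1) 0))
    (J : ℝ → Ω → ℝ) (W : Ω → ℝ) (hWm : Measurable W) (hW : P.map W = gaussianReal 0 1)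
    (hJm : ∀ h, Measurable (J h))
    (hJcf : ∀ h, 0 < h → ∀ u : ℝ,
      ∫ ω, Complex.exp (Complex.I * u * J h ω) ∂P = Complex.exp (h * psiJ b Y Cp Cm q u))
    (hindep : ∀ h, 0 < h → IndepFun W (J h) P) (μtilde : ℝ → Measure ℝ)
    (hμt : ∀ h, 0 < h → IsProbabilityMeasure (μtilde h))
    (hμtcf : ∀ h, 0 < h → ∀ u : ℝ,
      ∫ x, Complex.exp (Complex.I * u * x) ∂(μtilde h) = tildeCF σ Y Cp Cm h u)
    (ε : ℝ → ℝ) (hεpos : ∀ h, 0 < h → 0 < ε h) (hε0 : Tendsto ε (𝓝[>] 0) (𝓝 0))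
    (hεsqrt : Tendsto (fun h => ε h / √h) (𝓝[>] 0) atTop) {δ : ℝ} (hδ : 0 < δ) :
    ∃ R : Fin 4 → ℝ → ℝ,
      (∀ h, 0 < h → ∫ ω, truncSq (ε h) (σ * √h * W ω + J h ω) ∂P -
        ∫ x, truncSq (ε h) x ∂(μtilde h) = ∑ i, R i h) ∧
      ∀ i, R i =O[𝓝[>] 0] fun h => remainderRate Y δ h (ε h) i := by
  have hκ := isLowerOrderDensity_levyDensity_sub_one (by linarith) hCp hCm hqm hq0 hq_bdd hq_taylor
  have hJ := hasLevyExponent_map hJm hJcf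
  obtain ⟨M, hM⟩ := hq_bdd
  simp only [funext fun u => psiJ_eq b hY1 hY2 hCp hCm hC hqm hq0 hM hκ u] at hJ
  obtain ⟨K, hK⟩ := exists_abs_integral_truncSq_sub_le hY1 hY2 hCp hCm hC hσ hδ hκ hJ
    (hasLevyExponent_of_tildeCF hμt hμtcf)
  have hpos (i : Fin 4) (h : ℝ) (hh : 0 < h) := remainderRate_pos Y δ hh (hεpos h hh) i
  set k := ∫ x, x * levyDensity Y Cp Cm (fun x => q x - 1) x
  refine exists_sum_eq_and_isBigO self_mem_nhdsWithin hpos (IsBigO.of_bound K ?_)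
  filter_upwards [eventually_isSmallTimeRegime hY2 (compensatedDrift b Y Cp Cm q - k) k hε0 hεsqrt]
    with h hr
  have hh := hr.time_pos
  have hw : ((σ ^ 2 * h).toNNReal : ℝ) = σ ^ 2 * h := Real.coe_toNNReal _ (by positivity)
  have hlaw := map_mul_add_eq_gaussianReal_conv hWm hW (hJm h) (hindep h hh) (s := σ * √h)
    (by rw [hw, mul_pow, Real.sq_sqrt hh.le])
  rw [Real.norm_of_nonneg (Finset.sum_nonneg fun i _ => (hpos i h hh).le),
    ← integral_map (φ := fun ω => σ * √h * W ω + J h ω) (by fun_prop)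
      (measurable_truncSq (ε h)).aestronglyMeasurable, hlaw]
  exact hK h (ε h) _ hr hw

/-- Proposition B.2: the difference between the truncated second moments of
`X_h = σ√h·W + J_h` and of `X̃_h` decomposes into six explicit big-O remainders. -/
theorem truncated_second_moment_difference
    {Ω : Type*} [MeasurableSpace Ω] (P : Measure Ω) [IsProbabilityMeasure P]
    (Y Cp Cm σ b : ℝ) (q : ℝ → ℝ)
    (hY1 : 1 < Y) (hY2 : Y < 2)
    (hCp : 0 < Cp) (hCm : 0 < Cm) (hσ : 0 < σ)
    (hq_meas : Measurable q) (hq_nonneg : ∀ x, 0 ≤ q x)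
    (hq_bdd : ∃ M : ℝ, ∀ x, q x ≤ M)
    (hq_lim : Tendsto q (𝓝[≠] (0 : ℝ)) (𝓝 1))
    (hq_taylor : ∃ αp αm : ℝ, αp ≠ 0 ∧ αm ≠ 0 ∧
      IntegrableOn (fun x => |q x - 1 - αp * x| * x ^ (-Y - 1)) (Set.Ioc (0 : ℝ) 1) ∧
      IntegrableOn (fun x => |q x - 1 - αm * x| * |x| ^ (-Y - 1)) (Set.Ico (-1 : ℝ) 0))
    (hq_log : ∃ K M : ℝ, ∀ x : ℝ, M ≤ |x| → |Real.log (q x)| ≤ K * |x|)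
    (hq_inf : ∀ ε : ℝ, 0 < ε → ∃ c : ℝ, 0 < c ∧ ∀ x : ℝ, x ≠ 0 → |x| < ε → c ≤ q x)
    (hq_sq : IntegrableOn (fun x => q x ^ 2 * |x| ^ (-1 - Y)) {x : ℝ | 1 < |x|})
    -- the jump part `J` and the Brownian part `W`
    (J : ℝ → Ω → ℝ) (W : Ω → ℝ)
    (hWmeas : Measurable W) (hW : P.map W = gaussianReal 0 1)
    (hJmeas : ∀ h : ℝ, Measurable (J h))
    (hJcf : ∀ h : ℝ, 0 < h → ∀ u : ℝ,
      ∫ ω, Complex.exp (Complex.I * u * J h ω) ∂P = Complex.exp (h * psiJ b Y Cp Cm q u))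
    (hindep : ∀ h : ℝ, 0 < h → IndepFun W (J h) P)
    -- the law `μtilde h` of `X̃_h`
    (μtilde : ℝ → Measure ℝ)
    (hμt : ∀ h : ℝ, 0 < h → IsProbabilityMeasure (μtilde h))
    (hμtcf : ∀ h : ℝ, 0 < h → ∀ u : ℝ,
      ∫ x, Complex.exp (Complex.I * u * x) ∂(μtilde h) = tildeCF σ Y Cp Cm h u)
    -- the threshold `ε = ε(h)`
    (ε : ℝ → ℝ) (hεpos : ∀ h : ℝ, 0 < h → 0 < ε h)
    (hε0 : Tendsto ε (𝓝[>] (0 : ℝ)) (𝓝 0))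
    (hεsqrt : Tendsto (fun h => ε h / Real.sqrt h) (𝓝[>] (0 : ℝ)) atTop) :
    ∃ δ₀ : ℝ, 0 < δ₀ ∧ ∀ δ : ℝ, 0 < δ → δ < δ₀ →
      ∃ R₁ R₂ R₃ R₄ R₅ R₆ : ℝ → ℝ,
        (∀ h : ℝ, 0 < h →
          (∫ ω, Set.indicator {x : ℝ | |x| ≤ ε h} (fun x => x ^ 2)
              (σ * Real.sqrt h * W ω + J h ω) ∂P)
            - (∫ x, Set.indicator {x : ℝ | |x| ≤ ε h} (fun x => x ^ 2) x ∂(μtilde h))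
          = R₁ h + R₂ h + R₃ h + R₄ h + R₅ h + R₆ h) ∧
        R₁ =O[𝓝[>] (0 : ℝ)] (fun h => h ^ 3 * ε h ^ (-Y - 2)) ∧
        R₂ =O[𝓝[>] (0 : ℝ)] (fun h => h ^ ((3 : ℝ) / 2) * ε h ^ (1 - Y / 2)) ∧
        R₃ =O[𝓝[>] (0 : ℝ)] (fun h => h ^ 2 * ε h ^ (2 - 2 * Y)) ∧
        R₄ =O[𝓝[>] (0 : ℝ)] (fun h => h ^ (1 - δ) * ε h ^ (3 - Y + δ * Y)) ∧
        R₅ =O[𝓝[>] (0 : ℝ)]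
          (fun h => Real.sqrt h * ε h * Real.exp (-(ε h ^ 2) / (2 * σ ^ 2 * h))) ∧
        R₆ =O[𝓝[>] (0 : ℝ)]
          (fun h => Real.sqrt h * ε h ^ (3 - Y) * Real.exp (-(ε h ^ 2) / (8 * σ ^ 2 * h))) := by
  obtain ⟨αp, αm, -, -, hp, hm⟩ := hq_taylor
  refine ⟨1, one_pos, fun δ hδ _ => ?_⟩
  obtain ⟨R, hsum, hR⟩ := truncated_second_moment_difference_general P Y Cp Cm σ b q hY1 hY2 hCp.le
    hCm.le (add_pos hCp hCm) hσ hq_meas hq_nonneg hq_bdd ⟨αp, αm, hp, hm⟩ J W hWmeas hW hJmeas hJcf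
    hindep μtilde hμt hμtcf ε hεpos hε0 hεsqrt hδ
  exact ⟨R 0, R 1, R 2, R 3, 0, 0, fun h hh => (hsum h hh).trans (by simp [Fin.sum_univ_four]),
    hR 0, hR 1, hR 2, hR 3, isBigO_zero _ _, isBigO_zero _ _⟩

end
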